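/- arXiv:2308.03967 — 4 statements merged into one kernel-verified Lean document; each statement's English description precedes it below -/
import Mathlib

section
/- For every integer k ≥ 1, the number of edges of the graph G_k equals (8·4^k − 3·3^k − 5)/6. -/
/-- The recursively defined vertex sets `S(i,j)`:
`S(0,j) = {2j}` and `S(i+1,m) = S(i,3m) ∪ S(i,3m+1)`. -/
def Sset : ℕ → ℕ → Finset ℕ
  | 0, j => {2 * j}
  | i + 1, m => Sset i (3 * m) ∪ Sset i (3 * m + 1)

/-- The graph `G_k` on the vertex set `{0, 1, …, 3^k − 1}` (encoded as `Fin (3^k)`):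
its edges are (a) `{m, m+1}` for `0 ≤ m ≤ 3^k − 2`, and (b) `{u, v}` for every level
`0 ≤ i ≤ k−1`, every `j` with `0 ≤ j < (3^(k−i) + 1)/2 − 1`, every `u ∈ S(i,j)` and
every `v ∈ S(i,j+1)`. -/
def Gk (k : ℕ) : SimpleGraph (Fin (3 ^ k)) :=
  SimpleGraph.fromRel fun u v =>
    ((u : ℕ) + 1 = (v : ℕ)) ∨
    ∃ i < k, ∃ j : ℕ, j + 1 < (3 ^ (k - i) + 1) / 2 ∧
      (u : ℕ) ∈ Sset i j ∧ (v : ℕ) ∈ Sset i (j + 1)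

/-!
A vertex `u` lies in `S(i,j)` exactly when the truncations `⌊u / 3^d⌋` of its ternary expansion are
even for all `d ≤ i` and `⌊u / 3^i⌋ = 2j`. Hence the sets of one level are disjoint, of size `2^i`,
and level `i` contributes `4^i · (3^(k-i) - 1) / 2` edges. No edge arises on two levels: if
`⌊u / 3^i⌋` and `⌊v / 3^i⌋` differ by `2`, then `⌊u / 3^(i+1)⌋` and `⌊v / 3^(i+1)⌋` differ by at
most `1`, so they coincide as soon as both are even. Level edges join even vertices, so none of them
is one of the `3^k - 1` path edges, and the count is a sum of geometric series.
-/

open Finset Function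

theorem ncard_edgeSet_fromRel {V : Type*} {r : V → V → Prop} [Std.Asymm r] :
    (SimpleGraph.fromRel r).edgeSet.ncard = {p : V × V | r p.1 p.2}.ncard := by
  have image_mk :
      (SimpleGraph.fromRel r).edgeSet = (fun p => s(p.1, p.2)) '' {p : V × V | r p.1 p.2} := by
    ext e
    induction e with | _ u v
    rw [SimpleGraph.mem_edgeSet, SimpleGraph.fromRel_adj]
    constructor
    · rintro ⟨-, huv | hvu⟩
      · exact ⟨(u, v), huv, rfl⟩
      · exact ⟨(v, u), hvu, Sym2.eq_swap⟩
    · rintro ⟨⟨a, b⟩, hab : r a b, heq⟩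
      have hne : a ≠ b := fun h => asymm hab (h ▸ hab)
      rcases Sym2.eq_iff.1 heq with ⟨rfl, rfl⟩ | ⟨rfl, rfl⟩
      · exact ⟨hne, .inl hab⟩
      · exact ⟨hne.symm, .inr hab⟩
  rw [image_mk]
  refine Set.InjOn.ncard_image fun p hp q hq hpq => ?_
  rcases Sym2.eq_iff.1 hpq with ⟨hfst, hsnd⟩ | ⟨hfst, hsnd⟩
  · exact Prod.ext hfst hsnd
  · exact absurd (hfst ▸ hsnd ▸ hp) (asymm hq)

theorem div_pow_succ (n b i : ℕ) : n / b ^ (i + 1) = n / b ^ i / b := by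
  rw [pow_succ, Nat.div_div_eq_div_mul]

theorem two_mul_three_pow_div_two_add_one (m : ℕ) : 2 * (3 ^ m / 2) + 1 = 3 ^ m :=
  Nat.two_mul_div_two_add_one_of_odd (Odd.pow (by decide))

theorem mem_Sset {i j u : ℕ} :
    u ∈ Sset i j ↔ (∀ d ≤ i, Even (u / 3 ^ d)) ∧ u / 3 ^ i = 2 * j := by
  induction i generalizing j with
  | zero =>
    simp only [Sset, mem_singleton, Nat.le_zero, forall_eq, pow_zero, Nat.div_one, Nat.even_iff]
    omega
  | succ i ih =>
    simp only [Sset, mem_union, ih, ← and_or_left, Nat.le_succ_iff, or_imp, forall_and, forall_eq,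
      div_pow_succ, and_assoc, Nat.succ_eq_add_one]
    refine and_congr_right fun even_le => ?_
    have even_trunc := even_le i le_rfl
    rw [Nat.even_iff] at even_trunc ⊢
    omega

theorem pairwise_disjoint_Sset (i : ℕ) : Pairwise (Disjoint on Sset i) := by
  intro j j' hne
  refine disjoint_left.2 fun u hu hu' => hne ?_
  have := (mem_Sset.1 hu).2
  have := (mem_Sset.1 hu').2
  omega

theorem card_Sset (i j : ℕ) : #(Sset i j) = 2 ^ i := by
  induction i generalizing j with
  | zero => simp [Sset]
  | succ i ih =>
    rw [Sset, card_union_of_disjoint (pairwise_disjoint_Sset i (by omega)), ih, ih, pow_succ,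
      mul_two]

theorem eq_of_mem_Sset_of_adjacent_of_lt {a b x y z u v : ℕ} (hab : a < b)
    (hu : u ∈ Sset a x) (hv : v ∈ Sset a (x + 1)) (hu' : u ∈ Sset b y) (hv' : v ∈ Sset b z) :
    y = z := by
  rw [mem_Sset] at hu hv hu' hv'
  have eq_above : u / 3 ^ (a + 1) = v / 3 ^ (a + 1) := by
    have hu_even := hu'.1 (a + 1) hab
    have hv_even := hv'.1 (a + 1) hab
    rw [div_pow_succ, Nat.even_iff] at hu_even hv_even
    rw [div_pow_succ, div_pow_succ]
    omega
  have eq_at : u / 3 ^ b = v / 3 ^ b := by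
    obtain ⟨c, rfl⟩ := Nat.exists_eq_add_of_le hab
    rw [pow_add, ← Nat.div_div_eq_div_mul, ← Nat.div_div_eq_div_mul]
    exact congrArg (· / 3 ^ c) eq_above
  omega

/-- The type (b) edges of level `i` with index `j < n`, oriented from `S(i,j)` to `S(i,j+1)`. -/
def levelArcs (i n : ℕ) : Finset (ℕ × ℕ) :=
  (range n).biUnion fun j => Sset i j ×ˢ Sset i (j + 1)

/-- The edges of the path on `{0, …, n - 1}`, oriented upwards. -/
def pathArcs (n : ℕ) : Finset (ℕ × ℕ) :=
  (range (n - 1)).image fun m => (m, m + 1)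

/-- The edges of `G_k`, each oriented from its smaller to its larger endpoint. As `3 ^ (k - i)` is
odd, `3 ^ (k - i) / 2` is the number `(3 ^ (k - i) + 1) / 2 - 1` of admissible indices `j`. -/
def arcs (k : ℕ) : Finset (ℕ × ℕ) :=
  pathArcs (3 ^ k) ∪ (range k).biUnion fun i => levelArcs i (3 ^ (k - i) / 2)

theorem mem_levelArcs {i n u v : ℕ} :
    (u, v) ∈ levelArcs i n ↔ ∃ j < n, u ∈ Sset i j ∧ v ∈ Sset i (j + 1) := by
  simp only [levelArcs, mem_biUnion, mem_range, mem_product]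

theorem mem_pathArcs {n u v : ℕ} : (u, v) ∈ pathArcs n ↔ u + 1 = v ∧ v < n := by
  simp only [pathArcs, mem_image, mem_range, Prod.mk.injEq]
  constructor
  · rintro ⟨m, hm, rfl, rfl⟩
    omega
  · rintro ⟨rfl, hv⟩
    exact ⟨u, by omega, rfl, rfl⟩

theorem lt_of_mem_levelArcs {i n u v : ℕ} (h : (u, v) ∈ levelArcs i n) : u < v := by
  obtain ⟨j, -, hu, hv⟩ := mem_levelArcs.1 h
  refine Nat.lt_of_div_lt_div (c := 3 ^ i) ?_
  rw [(mem_Sset.1 hu).2, (mem_Sset.1 hv).2]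
  omega

theorem snd_lt_of_mem_levelArcs {i n u v : ℕ} (h : (u, v) ∈ levelArcs i n) :
    v < (2 * n + 1) * 3 ^ i := by
  obtain ⟨j, hj, -, hv⟩ := mem_levelArcs.1 h
  rw [← Nat.div_lt_iff_lt_mul (by positivity), (mem_Sset.1 hv).2]
  omega

theorem card_levelArcs (i n : ℕ) : #(levelArcs i n) = n * 4 ^ i := by
  rw [levelArcs, card_biUnion fun j _ j' _ hne =>
    disjoint_product.2 (.inl (pairwise_disjoint_Sset i hne))]
  simp only [card_product, card_Sset, ← mul_pow, sum_const, card_range, smul_eq_mul,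
    Nat.reduceMul]

theorem card_pathArcs (n : ℕ) : #(pathArcs n) = n - 1 := by
  rw [pathArcs, card_image_of_injective _ fun _ _ h => (Prod.mk.inj h).1, card_range]

theorem disjoint_levelArcs_of_lt {a b : ℕ} (hab : a < b) (m n : ℕ) :
    Disjoint (levelArcs a m) (levelArcs b n) := by
  refine disjoint_left.2 fun ⟨u, v⟩ ha hb => ?_
  obtain ⟨x, -, hu, hv⟩ := mem_levelArcs.1 ha
  obtain ⟨y, -, hu', hv'⟩ := mem_levelArcs.1 hb
  exact y.lt_succ_self.ne (eq_of_mem_Sset_of_adjacent_of_lt hab hu hv hu' hv')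

theorem disjoint_pathArcs_levelArcs (m i n : ℕ) : Disjoint (pathArcs m) (levelArcs i n) := by
  refine disjoint_left.2 fun ⟨u, v⟩ hpath hlevel => ?_
  obtain ⟨rfl, -⟩ := mem_pathArcs.1 hpath
  obtain ⟨j, -, hu, hv⟩ := mem_levelArcs.1 hlevel
  have hu_even := (mem_Sset.1 hu).1 0 i.zero_le
  have hv_even := (mem_Sset.1 hv).1 0 i.zero_le
  rw [pow_zero, Nat.div_one, Nat.even_iff] at hu_even hv_even
  omega

theorem card_arcs (k : ℕ) :
    #(arcs k) = (3 ^ k - 1) + ∑ i ∈ range k, 3 ^ (k - i) / 2 * 4 ^ i := by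
  rw [arcs, card_union_of_disjoint, card_biUnion, card_pathArcs]
  · simp only [card_levelArcs]
  · intro a _ b _ hne
    rcases hne.lt_or_gt with hab | hba
    · exact disjoint_levelArcs_of_lt hab _ _
    · exact (disjoint_levelArcs_of_lt hba _ _).symm
  · exact (disjoint_biUnion_right _ _ _).2 fun i _ => disjoint_pathArcs_levelArcs _ _ _

theorem lt_of_mem_arcs {k u v : ℕ} (h : (u, v) ∈ arcs k) : u < v := by
  rcases mem_union.1 h with hpath | hlevel
  · have := mem_pathArcs.1 hpath
    omega
  · obtain ⟨i, -, harc⟩ := mem_biUnion.1 hlevel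
    exact lt_of_mem_levelArcs harc

theorem snd_lt_of_mem_arcs {k u v : ℕ} (h : (u, v) ∈ arcs k) : v < 3 ^ k := by
  rcases mem_union.1 h with hpath | hlevel
  · exact (mem_pathArcs.1 hpath).2
  · obtain ⟨i, hi, harc⟩ := mem_biUnion.1 hlevel
    have hv := snd_lt_of_mem_levelArcs harc
    rwa [two_mul_three_pow_div_two_add_one, pow_sub_mul_pow 3 (mem_range.1 hi).le] at hv

theorem Gk_eq_fromRel_arcs (k : ℕ) :
    Gk k = SimpleGraph.fromRel fun u v : Fin (3 ^ k) => ((u : ℕ), (v : ℕ)) ∈ arcs k := by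
  have index_lt_iff (m j : ℕ) : j + 1 < (3 ^ m + 1) / 2 ↔ j < 3 ^ m / 2 := by
    have := two_mul_three_pow_div_two_add_one m
    omega
  simp only [Gk, arcs, mem_union, mem_pathArcs, mem_biUnion, mem_range, mem_levelArcs,
    index_lt_iff, Fin.is_lt, and_true]

theorem ncard_edgeSet_Gk (k : ℕ) : (Gk k).edgeSet.ncard = #(arcs k) := by
  have : Std.Asymm fun u v : Fin (3 ^ k) => ((u : ℕ), (v : ℕ)) ∈ arcs k :=
    ⟨fun _ _ huv hvu => (lt_of_mem_arcs huv).asymm (lt_of_mem_arcs hvu)⟩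
  rw [Gk_eq_fromRel_arcs, ncard_edgeSet_fromRel, ← Set.ncard_coe_finset]
  refine Set.ncard_preimage_of_injective_subset_range (f := Prod.map Fin.val Fin.val)
    (Fin.val_injective.prodMap Fin.val_injective) fun ⟨u, v⟩ huv => ?_
  have hv : v < 3 ^ k := snd_lt_of_mem_arcs huv
  exact ⟨(⟨u, (lt_of_mem_arcs huv).trans hv⟩, ⟨v, hv⟩), rfl⟩

theorem sum_three_pow_div_two_mul_four_pow (k : ℕ) :
    ∑ i ∈ range k, ((3 ^ (k - i) / 2 : ℕ) : ℚ) * 4 ^ i = (8 * 4 ^ k - 9 * 3 ^ k + 1) / 6 := by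
  have geom_sum_four_three : ∑ i ∈ range k, (4 : ℚ) ^ i * 3 ^ (k - 1 - i) = 4 ^ k - 3 ^ k := by
    have := geom_sum₂_mul (4 : ℚ) 3 k
    linarith
  have geom_sum_four : ∑ i ∈ range k, (4 : ℚ) ^ i = (4 ^ k - 1) / 3 := by
    rw [geom_sum_eq (by norm_num)]
    norm_num
  have halved_term (i : ℕ) (hi : i ∈ range k) : ((3 ^ (k - i) / 2 : ℕ) : ℚ) * 4 ^ i =
      3 / 2 * (4 ^ i * 3 ^ (k - 1 - i)) - 1 / 2 * 4 ^ i := by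
    have half : (2 * (3 ^ (k - i) / 2 : ℕ) + 1 : ℚ) = 3 ^ (k - i) :=
      mod_cast two_mul_three_pow_div_two_add_one (k - i)
    have exponent : k - i = k - 1 - i + 1 := by
      have := mem_range.1 hi
      omega
    rw [exponent, pow_succ (3 : ℚ), ← exponent] at half
    linear_combination (4 : ℚ) ^ i / 2 * half
  rw [sum_congr rfl halved_term, sum_sub_distrib, ← mul_sum, ← mul_sum, geom_sum_four_three,
    geom_sum_four]
  ring

/-- For every integer `k ≥ 1`, the number of edges of `G_k` equals
`(8·4^k − 3·3^k − 5)/6`. -/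
theorem stmt_8 (k : ℕ) (hk : 1 ≤ k) :
    ((Gk k).edgeSet.ncard : ℚ) =
      (8 * 4 ^ k - 3 * 3 ^ k - 5) / 6 := by
  have path_card : ((3 ^ k - 1 : ℕ) : ℚ) = 3 ^ k - 1 := by
    rw [Nat.cast_pred (by positivity), Nat.cast_pow, Nat.cast_ofNat]
  rw [ncard_edgeSet_Gk, card_arcs, Nat.cast_add, path_card, Nat.cast_sum]
  simp only [Nat.cast_mul, Nat.cast_pow, Nat.cast_ofNat, sum_three_pow_div_two_mul_four_pow]
  ring
end

section
/- For every natural number r there exists a natural number k₀ such that for every k ≥ k₀, every bipartition of the vertex set {0, 1, …, 3^k − 1} of G_k into sets A and B with |A| ≥ 3^k/3 and |B| ≥ 3^k/3 has biadjacency matrix over ℤ/2 of rank strictly greater than r. -/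
open scoped Classical in
/-- The rank over `ℤ/2` of the biadjacency matrix of the bipartition `(A, B)` of the
vertex set of `G`: the `A × B` matrix whose `(a, b)` entry is `1` if `a` and `b` are
adjacent and `0` otherwise.  (It is encoded as a `V × V` matrix padded with zeros
outside `A × B`, which has the same rank.) -/
noncomputable def biadjRank {V : Type*} [Fintype V] (G : SimpleGraph V)
    (A B : Set V) : ℕ :=
  (Matrix.of fun a b : V =>
    if a ∈ A ∧ b ∈ B ∧ G.Adj a b then (1 : ZMod 2) else 0).rank

/-!
All the `G_k` are induced subgraphs of one infinite graph on `ℕ`, so let `X` be a set of vertices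
and consider its cut-rank `ρ` inside an initial segment `{0, …, n - 1}`.

A long path has small cut-rank only if `X` changes along it rarely: odd vertices have degree two,
so changes of equal parity and direction give a triangular submatrix, and there are at most `4ρ`
changes. By pigeonhole over scales, some window of scales `[U, V)` contains no distance between two
changes, so the changes form clusters of diameter less than `U` lying at least `V` apart. If `X`
and its complement both have more points than fit near the clusters, then some cluster, near `p`
say, separates a long run inside `X` from a long run outside `X`.

For each of many scales between `U` and `V` there is an edge `{a, b}` across `p` of about that
length with `a ∈ S(i, j)`, `b ∈ S(i, j + 1)` and `j` not divisible by `3`. Then `j ≡ 2` or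
`j + 1 ≡ 2` modulo `3`, so one of `a`, `b` lies in no `S(l, ·)` with `l > i` and hence has no edges
longer than `3 ^ (i + 1)`. The edges of the more frequent type form a triangular submatrix.
-/

open Finset

section Sset

variable {i j x : ℕ}

lemma sset_subset_Ico (i j : ℕ) : Sset i j ⊆ Ico (2 * j * 3 ^ i) ((2 * j + 1) * 3 ^ i) := by
  induction i generalizing j with
  | zero => simp [Sset]
  | succ i ih =>
    have hpos : 0 < 3 ^ i := by positivity
    refine union_subset ((ih _).trans ?_) ((ih _).trans ?_) <;>
      refine Ico_subset_Ico ?_ ?_ <;> rw [pow_succ] <;> nlinarith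

lemma mem_sset_iff :
    x ∈ Sset i j ↔ Even x ∧ x / 2 / 3 ^ i = j ∧ ∀ l < i, x / 2 / 3 ^ l % 3 ≠ 2 := by
  induction i generalizing j with
  | zero =>
    simp only [Sset, mem_singleton, Nat.even_iff, pow_zero, Nat.div_one, Nat.not_lt_zero,
      IsEmpty.forall_iff, implies_true, and_true]
    omega
  | succ i ih =>
    simp only [Sset, mem_union, ih, Nat.forall_lt_succ_right, pow_succ, ← Nat.div_div_eq_div_mul]
    have hdigit : ∀ d : ℕ, d = 3 * j ∨ d = 3 * j + 1 ↔ d / 3 = j ∧ d % 3 ≠ 2 := by omega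
    rw [← and_or_left, ← or_and_right, hdigit]
    tauto

lemma two_mul_mul_pow_mem_sset (i j : ℕ) : 2 * j * 3 ^ i ∈ Sset i j := by
  induction i generalizing j with
  | zero => simp [Sset]
  | succ i ih =>
    refine mem_union_left _ ?_
    convert ih (3 * j) using 1
    ring

lemma two_mul_add_one_mul_pow_sub_one_mem_sset (i j : ℕ) : (2 * j + 1) * 3 ^ i - 1 ∈ Sset i j := by
  induction i generalizing j with
  | zero => simp [Sset]
  | succ i ih =>
    refine mem_union_right _ ?_
    convert ih (3 * j + 1) using 2
    ring

lemma notMem_sset_of_mod_three_eq_two {l m : ℕ} (hx : x ∈ Sset i j) (hj : j % 3 = 2)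
    (hil : i < l) : x ∉ Sset l m := by
  intro hxl
  rw [mem_sset_iff] at hx hxl
  exact hxl.2.2 i hil (hx.2.1 ▸ hj)

lemma lt_of_mem_sset_of_lt_pow {k : ℕ} (hx : x ∈ Sset i j) (hj : 0 < j) (hxk : x < 3 ^ k) :
    i < k ∧ j < (3 ^ (k - i) + 1) / 2 := by
  have hlt : 2 * j * 3 ^ i < 3 ^ k := (mem_Ico.1 (sset_subset_Ico i j hx)).1.trans_lt hxk
  have hik : i < k := by
    refine (Nat.pow_lt_pow_iff_right (a := 3) (by norm_num)).1 (lt_of_le_of_lt ?_ hlt)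
    exact Nat.le_mul_of_pos_left _ (by omega)
  rw [← Nat.sub_add_cancel hik.le, pow_add] at hlt
  have := Nat.lt_of_mul_lt_mul_right hlt
  omega

end Sset

/-- The union of the graphs `G_k`: the infinite graph on `ℕ` with the edges `{m, m + 1}` and all
edges between `S(i, j)` and `S(i, j + 1)`. Each `G_k` is an induced subgraph of it, which removes
the bounds on `i` and `j`. -/
def limitGraph : SimpleGraph ℕ :=
  SimpleGraph.fromRel fun u v => u + 1 = v ∨ ∃ i j, u ∈ Sset i j ∧ v ∈ Sset i (j + 1)

lemma gk_eq_comap (k : ℕ) : Gk k = limitGraph.comap Fin.val := by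
  have hbounds : ∀ u v : Fin (3 ^ k),
      (∃ i < k, ∃ j, j + 1 < (3 ^ (k - i) + 1) / 2 ∧ (u : ℕ) ∈ Sset i j ∧ (v : ℕ) ∈ Sset i (j + 1))
        ↔ ∃ i j, (u : ℕ) ∈ Sset i j ∧ (v : ℕ) ∈ Sset i (j + 1) := by
    refine fun u v => ⟨fun ⟨i, _, j, _, h⟩ => ⟨i, j, h⟩, fun ⟨i, j, hu, hv⟩ => ?_⟩
    obtain ⟨hi, hj⟩ := lt_of_mem_sset_of_lt_pow hv j.succ_pos v.2
    exact ⟨i, hi, j, hj, hu, hv⟩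
  ext u v
  simp only [Gk, limitGraph, SimpleGraph.fromRel_adj, SimpleGraph.comap_adj, hbounds, ne_eq,
    Fin.ext_iff]

section LimitGraph

variable {i j u v : ℕ}

lemma lt_of_mem_sset_of_mem_sset_succ (hu : u ∈ Sset i j) (hv : v ∈ Sset i (j + 1)) : u < v := by
  refine (mem_Ico.1 (sset_subset_Ico i j hu)).2.trans_le
    (le_trans ?_ (mem_Ico.1 (sset_subset_Ico i (j + 1) hv)).1)
  gcongr
  omega

lemma limitGraph_adj_succ (m : ℕ) : limitGraph.Adj m (m + 1) :=
  (SimpleGraph.fromRel_adj _ _ _).2 ⟨m.succ_ne_self.symm, .inl (.inl rfl)⟩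

lemma limitGraph_adj_of_mem_sset (hu : u ∈ Sset i j) (hv : v ∈ Sset i (j + 1)) :
    limitGraph.Adj u v :=
  (SimpleGraph.fromRel_adj _ _ _).2
    ⟨(lt_of_mem_sset_of_mem_sset_succ hu hv).ne, .inl (.inr ⟨i, j, hu, hv⟩)⟩

lemma limitGraph_adj_iff_of_lt (huv : u < v) :
    limitGraph.Adj u v ↔ u + 1 = v ∨ ∃ i j, u ∈ Sset i j ∧ v ∈ Sset i (j + 1) := by
  refine ⟨fun h => ?_, ?_⟩
  · obtain ⟨_, h | h | ⟨i, j, hv, hu⟩⟩ := (SimpleGraph.fromRel_adj _ _ _).1 h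
    · exact h
    · omega
    · exact absurd (lt_of_mem_sset_of_mem_sset_succ hv hu) huv.not_gt
  · rintro (rfl | ⟨i, j, hu, hv⟩)
    exacts [limitGraph_adj_succ u, limitGraph_adj_of_mem_sset hu hv]

lemma even_and_even_of_limitGraph_adj (huv : u + 1 < v) (h : limitGraph.Adj u v) :
    Even u ∧ Even v := by
  obtain h | ⟨i, j, hu, hv⟩ := (limitGraph_adj_iff_of_lt (by omega)).1 h
  · omega
  · exact ⟨(mem_sset_iff.1 hu).1, (mem_sset_iff.1 hv).1⟩

lemma exists_lt_level_of_limitGraph_adj (huv : u + 3 * 3 ^ i ≤ v) (h : limitGraph.Adj u v) :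
    ∃ l > i, ∃ m, u ∈ Sset l m ∧ v ∈ Sset l (m + 1) := by
  have hpos : 0 < 3 ^ i := by positivity
  obtain h | ⟨l, m, hu, hv⟩ := (limitGraph_adj_iff_of_lt (by omega)).1 h
  · omega
  refine ⟨l, lt_of_not_ge fun hli => ?_, m, hu, hv⟩
  have hu' := (mem_Ico.1 (sset_subset_Ico l m hu)).1
  have hv' := (mem_Ico.1 (sset_subset_Ico l (m + 1) hv)).2
  have : 3 ^ l ≤ 3 ^ i := Nat.pow_le_pow_right (by norm_num) hli
  nlinarith

lemma not_limitGraph_adj_of_left_mod_three_eq_two (hu : u ∈ Sset i j) (hj : j % 3 = 2)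
    (huv : u + 3 * 3 ^ i ≤ v) : ¬ limitGraph.Adj u v := by
  intro h
  obtain ⟨l, hil, m, hul, -⟩ := exists_lt_level_of_limitGraph_adj huv h
  exact notMem_sset_of_mod_three_eq_two hu hj hil hul

lemma not_limitGraph_adj_of_right_mod_three_eq_two (hv : v ∈ Sset i j) (hj : j % 3 = 2)
    (huv : u + 3 * 3 ^ i ≤ v) : ¬ limitGraph.Adj u v := by
  intro h
  obtain ⟨l, hil, m, -, hvl⟩ := exists_lt_level_of_limitGraph_adj huv h
  exact notMem_sset_of_mod_three_eq_two hv hj hil hvl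

end LimitGraph

section Rank

variable {V : Type*} [Fintype V] (G : SimpleGraph V) (A B : Set V)

lemma biadjRank_comm : biadjRank G A B = biadjRank G B A := by
  unfold biadjRank
  rw [← Matrix.rank_transpose]
  congr 1
  ext a b
  simp only [Matrix.transpose_apply, Matrix.of_apply]
  congr 1
  rw [G.adj_comm, and_left_comm]

variable {G A B}

lemma card_le_biadjRank {ι : Type*} [Fintype ι] [LinearOrder ι] {f g : ι → V}
    (hf : ∀ i, f i ∈ A) (hg : ∀ i, g i ∈ B) (hadj : ∀ i, G.Adj (f i) (g i))
    (hnadj : ∀ i j, i < j → ¬ G.Adj (f i) (g j)) : Fintype.card ι ≤ biadjRank G A B := by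
  classical
  set M : Matrix V V (ZMod 2) := .of fun a b => if a ∈ A ∧ b ∈ B ∧ G.Adj a b then 1 else 0
    with hM
  have htri : (M.submatrix f g).IsLowerTriangular := fun i j hij => by
    simp [hM, hnadj i j (by simpa using hij)]
  have hdet : (M.submatrix f g).det = 1 := by
    rw [Matrix.det_of_isLowerTriangular _ htri]
    exact prod_eq_one fun i _ => by simp [hM, hf, hg, hadj]
  calc Fintype.card ι = (M.submatrix f g).rank :=
        (Matrix.rank_of_isUnit _ ((Matrix.isUnit_iff_isUnit_det _).2 (by simp [hdet]))).symm
    _ ≤ M.rank := Matrix.rank_submatrix_le M f g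
    _ = biadjRank G A B := by rw [biadjRank, hM]

end Rank

/-- The cut-rank of `X ∩ {0, …, n - 1}` in the subgraph of `limitGraph` induced on
`{0, …, n - 1}`. Taking `X` to be a set of natural numbers keeps `Fin n` out of the arguments. -/
noncomputable def cutRank (n : ℕ) (X : Set ℕ) : ℕ :=
  biadjRank (limitGraph.comap (Fin.val : Fin n → ℕ)) (Fin.val ⁻¹' X) (Fin.val ⁻¹' X)ᶜ

section CutRank

variable {n : ℕ} {X : Set ℕ}

lemma cutRank_compl (n : ℕ) (X : Set ℕ) : cutRank n Xᶜ = cutRank n X := by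
  rw [cutRank, cutRank, biadjRank_comm, Set.preimage_compl, compl_compl]

lemma card_le_cutRank {ι : Type*} [LinearOrder ι] {s : Finset ι} {f g : ι → ℕ}
    (hf : ∀ i ∈ s, f i < n ∧ f i ∈ X) (hg : ∀ i ∈ s, g i < n ∧ g i ∉ X)
    (hadj : ∀ i ∈ s, limitGraph.Adj (f i) (g i))
    (hnadj : ∀ i ∈ s, ∀ j ∈ s, i < j → ¬ limitGraph.Adj (f i) (g j)) : #s ≤ cutRank n X := by
  rw [← Fintype.card_coe s]
  exact card_le_biadjRank (f := fun i : s => ⟨f i, (hf i i.2).1⟩)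
    (g := fun i : s => ⟨g i, (hg i i.2).1⟩) (fun i => (hf i i.2).2) (fun i => (hg i i.2).2)
    (fun i => hadj i i.2) (fun i j hij => hnadj i i.2 j j.2 hij)

end CutRank

open scoped Classical in
/-- The points `m` at which the path `0, 1, …, n - 1` enters or leaves `X`, that is, exactly one of
`m` and `m + 1` lies in `X`. -/
noncomputable def boundary (n : ℕ) (X : Set ℕ) : Finset ℕ :=
  {m ∈ range n | m + 1 < n ∧ ¬ (m ∈ X ↔ m + 1 ∈ X)}

section Boundary

variable {n : ℕ} {X : Set ℕ} {x y m : ℕ}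

lemma mem_boundary : m ∈ boundary n X ↔ m + 1 < n ∧ ¬ (m ∈ X ↔ m + 1 ∈ X) := by
  simp only [boundary, mem_filter, mem_range, and_iff_right_iff_imp]
  omega

lemma boundary_compl (n : ℕ) (X : Set ℕ) : boundary n Xᶜ = boundary n X := by
  ext m
  simp only [mem_boundary, Set.mem_compl_iff, not_iff_not]

lemma mem_iff_mem_of_forall_boundary (hxy : x ≤ y) (hy : y < n)
    (h : ∀ m ∈ boundary n X, x ≤ m → y ≤ m) : x ∈ X ↔ y ∈ X := by
  induction y, hxy using Nat.le_induction with
  | base => rfl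
  | succ y hxy ih =>
    refine (ih (by omega) fun m hm hxm => (Nat.le_succ y).trans (h m hm hxm)).trans ?_
    by_contra hne
    have := h y (mem_boundary.2 ⟨hy, hne⟩) hxy
    omega

lemma exists_mem_boundary_of_mem_of_notMem (hxy : x < y) (hy : y < n) (hxX : x ∈ X)
    (hyX : y ∉ X) : ∃ p ∈ boundary n X, x ≤ p ∧ p < y ∧ ∀ z, x ≤ z → z ≤ p → z ∈ X := by
  by_contra! hall
  have hsub : ∀ p, x ≤ p → p ≤ y → ∀ z, x ≤ z → z ≤ p → z ∈ X := by
    intro p hxp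
    induction p, hxp using Nat.le_induction with
    | base => exact fun _ z hxz hzx => le_antisymm hxz hzx ▸ hxX
    | succ p hxp ih =>
      intro hpy z hxz hzp
      have hrun := ih (by omega)
      obtain hzp | rfl := Nat.le_succ_iff.1 hzp
      · exact hrun z hxz hzp
      by_contra hp
      obtain ⟨w, hxw, hwp, hw⟩ := hall p
        (mem_boundary.2 ⟨by omega, fun h => hp (h.1 (hrun p hxp le_rfl))⟩) hxp (by omega)
      exact hw (hrun w hxw hwp)
  exact hyX (hsub y hxy.le le_rfl y hxy.le le_rfl)

lemma card_le_cutRank_of_parity {s : Finset ℕ} (hs : ∀ m ∈ s, m + 1 < n ∧ m ∈ X ∧ m + 1 ∉ X)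
    (hparity : ∀ m ∈ s, ∀ m' ∈ s, Even m ↔ Even m') : #s ≤ cutRank n X := by
  refine card_le_cutRank (f := id) (g := (· + 1)) (fun m hm => ⟨by grind, (hs m hm).2.1⟩)
    (fun m hm => ⟨(hs m hm).1, (hs m hm).2.2⟩) (fun m _ => limitGraph_adj_succ m) ?_
  intro m hm m' hm' hlt hadj
  obtain ⟨heven, heven'⟩ := even_and_even_of_limitGraph_adj (Nat.add_lt_add_right hlt 1) hadj
  exact (Nat.even_add_one.1 heven') ((hparity m hm m' hm').1 heven)

lemma card_boundary_le (n : ℕ) (X : Set ℕ) : #(boundary n X) ≤ 4 * cutRank n X := by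
  classical
  have hclass : ∀ c ∈ (univ : Finset (Prop × Prop)),
      #{m ∈ boundary n X | (Even m, m ∈ X) = c} ≤ cutRank n X := by
    rintro ⟨parity, inside⟩ -
    have hmem : ∀ m ∈ {m ∈ boundary n X | (Even m, m ∈ X) = (parity, inside)},
        (m + 1 < n ∧ ¬ (m ∈ X ↔ m + 1 ∈ X)) ∧ (Even m ↔ parity) ∧ (m ∈ X ↔ inside) := by
      simp only [mem_filter, mem_boundary, Prod.mk.injEq, eq_iff_iff, imp_self, implies_true]
    have hparity := fun m hm m' hm' => (hmem m hm).2.1.trans (hmem m' hm').2.1.symm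
    by_cases hin : inside
    · exact card_le_cutRank_of_parity (fun m hm => by have := hmem m hm; tauto) hparity
    · rw [← cutRank_compl]
      refine card_le_cutRank_of_parity (fun m hm => ?_) hparity
      have := hmem m hm
      simp only [Set.mem_compl_iff]
      tauto
  calc #(boundary n X) ≤ cutRank n X * #(univ : Finset (Prop × Prop)) :=
        card_le_mul_card_image_of_maps_to (fun _ _ => mem_univ _) _ hclass
    _ = 4 * cutRank n X := by simp [mul_comm]

end Boundary

/-- A point `p` such that all vertices to its left at distance in `[U, V)` lie in `X`, all vertices
to its right at distance in `[U, V)` lie outside `X`, and both ranges fit inside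
`{0, …, n - 1}`. -/
structure IsSharpCut (n : ℕ) (X : Set ℕ) (U V p : ℕ) : Prop where
  le_left : V ≤ p
  le_right : p + V ≤ n
  mem_left : ∀ z, p < z + V → z + U ≤ p → z ∈ X
  notMem_right : ∀ z, p + U ≤ z → z < p + V → z ∉ X

section SharpCut

variable {n p : ℕ} {X : Set ℕ}

/-- In units of `3 ^ e`, the right-hand interval is what an edge from `S(e + d, j)` to
`S(e + d, j + 1)` spans. The intervals with `d = 1` and `3 ∤ j` leave gaps that those with `d = 2`
and `3 ∤ j` cover. -/
lemma exists_index_near {y : ℕ} (hy : 27 ≤ y) :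
    ∃ d ≤ 2, ∃ j, j % 3 ≠ 0 ∧ 2 * j * 3 ^ d + 1 ≤ y ∧ y + 2 ≤ (2 * j + 3) * 3 ^ d := by
  by_cases h₁ : (y - 1) / 6 % 3 = 0
  · by_cases h₂ : (y - 1) / 18 % 3 = 0
    · exact ⟨2, by omega, (y - 1) / 18 - 1, by omega⟩
    · exact ⟨2, by omega, (y - 1) / 18, by omega⟩
  · exact ⟨1, by omega, (y - 1) / 6, by omega⟩

lemma exists_edge_across {e : ℕ} (hp : 27 * 3 ^ e ≤ p) :
    ∃ i ≤ e + 2, ∃ j, j % 3 ≠ 0 ∧ ∃ a ∈ Sset i j, ∃ b ∈ Sset i (j + 1),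
      (a + 3 ^ e ≤ p ∧ p < a + 27 * 3 ^ e) ∧ p + 3 ^ e ≤ b ∧ b < p + 27 * 3 ^ e := by
  have hpos : 0 < 3 ^ e := by positivity
  obtain ⟨y, hy⟩ : ∃ y, y = p / 3 ^ e := ⟨_, rfl⟩
  have hyp : y * 3 ^ e ≤ p := hy ▸ Nat.div_mul_le_self _ _
  have hpy : p < (y + 1) * 3 ^ e := by rw [hy, mul_comm]; exact Nat.lt_mul_div_succ _ hpos
  obtain ⟨d, hd, j, hj, hlo, hhi⟩ :=
    exists_index_near (y := y) (hy ▸ (Nat.le_div_iff_mul_le hpos).2 hp)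
  have hlen : (2 * j + 3) * 3 ^ d ≤ 2 * j * 3 ^ d + 27 := by
    have : 3 ^ d ≤ 3 ^ 2 := Nat.pow_le_pow_right (by norm_num) hd
    linarith
  refine ⟨e + d, by omega, j, hj, _, two_mul_mul_pow_mem_sset _ _, _,
    two_mul_add_one_mul_pow_sub_one_mem_sset _ _, ?_⟩
  have ha : 2 * j * 3 ^ (e + d) = 2 * j * 3 ^ d * 3 ^ e := by ring
  have hb : (2 * (j + 1) + 1) * 3 ^ (e + d) = (2 * j + 3) * 3 ^ d * 3 ^ e := by ring
  have hlo := Nat.mul_le_mul_right (3 ^ e) hlo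
  have hhi := Nat.mul_le_mul_right (3 ^ e) hhi
  have hlen := Nat.mul_le_mul_right (3 ^ e) hlen
  rw [ha, hb]
  rw [Nat.add_mul _ _ (3 ^ e)] at hlo hhi hlen hpy
  omega

lemma IsSharpCut.exists_edge {U V e : ℕ} (h : IsSharpCut n X U V p) (hU : U ≤ 3 ^ e)
    (hV : 27 * 3 ^ e ≤ V) :
    ∃ i j a b, i ≤ e + 2 ∧ j % 3 ≠ 0 ∧ a ∈ Sset i j ∧ b ∈ Sset i (j + 1) ∧
      a + 3 ^ e ≤ p ∧ p + 3 ^ e ≤ b ∧ (a < n ∧ a ∈ X) ∧ (b < n ∧ b ∉ X) := by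
  have hVp := h.le_left
  have hpn := h.le_right
  obtain ⟨i, hi, j, hj, a, ha, b, hb, ⟨hap, hpa⟩, hpb, hbp⟩ := exists_edge_across (hV.trans hVp)
  exact ⟨i, j, a, b, hi, hj, ha, hb, hap, hpb, ⟨by omega, h.mem_left a (by omega) (by omega)⟩,
    ⟨by omega, h.notMem_right b (by omega) (by omega)⟩⟩

lemma IsSharpCut.le_two_mul_cutRank {s T : ℕ} (h : IsSharpCut n X (3 ^ s) (3 ^ (s + 3 * T)) p) :
    T ≤ 2 * cutRank n X := by
  have hU : ∀ t : Fin T, 3 ^ s ≤ 3 ^ (s + 3 * t : ℕ) := fun t =>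
    Nat.pow_le_pow_right (by norm_num) (by omega)
  have hV : ∀ t : Fin T, 27 * 3 ^ (s + 3 * t : ℕ) ≤ 3 ^ (s + 3 * T) := fun t => by
    rw [show 27 = 3 ^ 3 by norm_num, ← pow_add]
    exact Nat.pow_le_pow_right (by norm_num) (by omega)
  choose i j a b hi hj ha hb hap hpb haX hbX using fun t => h.exists_edge (hU t) (hV t)
  have hadj : ∀ t, limitGraph.Adj (a t) (b t) := fun t => limitGraph_adj_of_mem_sset (ha t) (hb t)
  have hscale : ∀ t t', t < t' → 3 * 3 ^ i t ≤ 3 ^ (s + 3 * t' : ℕ) := fun t t' htt' => by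
    rw [← pow_succ']
    exact Nat.pow_le_pow_right (by norm_num) (by have := hi t; omega)
  have hlong : ∀ t t', t < t' → a t + 3 * 3 ^ i t ≤ b t' ∧ a t' + 3 * 3 ^ i t ≤ b t := by
    intro t t' htt'
    have : 0 < 3 ^ (s + 3 * t : ℕ) := by positivity
    have := hscale t t' htt'
    have := hap t
    have := hap t'
    have := hpb t
    have := hpb t'
    omega
  have htwo : #{t | j t % 3 = 2} ≤ cutRank n X := by
    refine card_le_cutRank (fun t _ => haX t) (fun t _ => hbX t) (fun t _ => hadj t) ?_
    intro t ht t' _ htt'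
    exact not_limitGraph_adj_of_left_mod_three_eq_two (ha t) (mem_filter.1 ht).2
      (hlong t t' htt').1
  have hone : #{t | ¬ j t % 3 = 2} ≤ cutRank n X := by
    rw [← cutRank_compl]
    refine card_le_cutRank (fun t _ => hbX t) (fun t _ => ⟨(haX t).1, not_not_intro (haX t).2⟩)
      (fun t _ => (hadj t).symm) ?_
    intro t ht t' _ htt' hadj'
    have hjt : (j t + 1) % 3 = 2 := by have := hj t; have := (mem_filter.1 ht).2; omega
    exact not_limitGraph_adj_of_right_mod_three_eq_two (hb t) hjt (hlong t t' htt').2 hadj'.symm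
  have hsplit := card_filter_add_card_filter_not (s := (univ : Finset (Fin T))) (j · % 3 = 2)
  rw [card_univ, Fintype.card_fin] at hsplit
  omega

end SharpCut

/-- No two points of `D` have distance in `[U, V)`; for `V` much larger than `U` this says that `D`
consists of tight clusters far apart from each other. -/
def IsClustered (D : Finset ℕ) (U V : ℕ) : Prop :=
  ∀ a ∈ D, ∀ b ∈ D, a ≤ b → b < a + U ∨ a + V ≤ b

/-- The point `x` has distance at least `U` from every point of `D`. -/
def IsFar (D : Finset ℕ) (U x : ℕ) : Prop :=
  ∀ a ∈ D, a + U ≤ x ∨ x + U ≤ a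

section Clustered

variable {D : Finset ℕ}

lemma exists_forall_lt_pow_or_pow_le {b : ℕ} (hb : 1 < b) (D : Finset ℕ) (W : ℕ) :
    ∃ t ≤ #D, ∀ d ∈ D, d < b ^ (t * W) ∨ b ^ (t * W + W) ≤ d := by
  obtain ⟨t, ht, hlog⟩ : ∃ t ∈ range (#D + 1), t ∉ D.image (Nat.log b · / W) :=
    exists_mem_notMem_of_card_lt_card (by
      rw [card_range]; exact Nat.lt_succ_of_le card_image_le)
  refine ⟨t, by grind, fun d hd => ?_⟩
  by_contra! hc
  have hd0 : d ≠ 0 := (lt_of_lt_of_le (by positivity) hc.1).ne'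
  refine hlog (mem_image.2 ⟨d, hd, Nat.div_eq_of_lt_le ?_ ?_⟩)
  · exact (Nat.le_log_iff_pow_le hb hd0).2 hc.1
  · rw [Nat.succ_mul]
    exact (Nat.log_lt_iff_lt_pow hb hd0).2 hc.2

lemma exists_isClustered_pow {b : ℕ} (hb : 1 < b) (D : Finset ℕ) (W : ℕ) :
    ∃ t ≤ #D * #D, IsClustered D (b ^ (t * W)) (b ^ (t * W + W)) := by
  obtain ⟨t, ht, hdist⟩ := exists_forall_lt_pow_or_pow_le hb (image₂ (fun x y => y - x) D D) W
  refine ⟨t, ht.trans (card_image₂_le _ _ _), fun x hx y hy hxy => ?_⟩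
  have := hdist (y - x) (mem_image₂_of_mem hx hy)
  omega

lemma exists_isFar_mem {U : ℕ} {S : Set ℕ} (h : #D * (2 * U) < S.ncard) :
    ∃ x ∈ S, IsFar D U x := by
  by_contra! hnear
  have hsub : S ⊆ D.biUnion fun a => Ico (a - U) (a + U) := by
    intro x hx
    simp only [IsFar, not_forall, not_or, not_le] at hnear
    obtain ⟨a, ha, hxa, hax⟩ := hnear x hx
    exact mem_coe.2 (mem_biUnion.2 ⟨a, ha, mem_Ico.2 (by omega)⟩)
  refine h.not_ge ?_
  calc S.ncard ≤ #(D.biUnion fun a => Ico (a - U) (a + U)) :=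
        (Set.ncard_le_ncard hsub (finite_toSet _)).trans_eq (Set.ncard_coe_finset _)
    _ ≤ #D * (2 * U) := card_biUnion_le_card_mul _ _ _ fun a _ => by rw [Nat.card_Ico]; omega

variable {n U V x y : ℕ} {X : Set ℕ}

lemma IsClustered.exists_isSharpCut_of_lt (hD : IsClustered D U V) (hU : 0 < U) (hUV : 3 * U ≤ V)
    (hzero : 0 ∈ D) (hn : n ∈ D) (hboundary : boundary n X ⊆ D) (hx : IsFar D U x)
    (hy : IsFar D U y) (hxy : x < y) (hyn : y < n) (hxX : x ∈ X) (hyX : y ∉ X) :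
    ∃ p, IsSharpCut n X U V p := by
  induction hd : y - x using Nat.strong_induction_on generalizing x with
  | h d ih =>
  obtain ⟨p, hp, hxp, hpy, hrun⟩ := exists_mem_boundary_of_mem_of_notMem hxy hyn hxX hyX
  have hpD := hboundary hp
  have hxUp : x + U ≤ p := (hx p hpD).resolve_left (by omega)
  have hpUy : p + U ≤ y := (hy p hpD).resolve_right (by omega)
  have hVp : V ≤ p := by have := hD 0 hzero p hpD (by omega); omega
  have hpVn : p + V ≤ n := by have := hD p hpD n hn (by omega); omega
  have hleft : ∀ z, p < z + V → z + U ≤ p → z ∈ X := by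
    intro z hpz hzp
    obtain hxz | hzx := le_total x z
    · exact hrun z hxz (by omega)
    refine (mem_iff_mem_of_forall_boundary hzx (hxy.trans hyn) fun m hm hzm => ?_).2 hxX
    by_contra! hmx
    have := hD m (hboundary hm) p hpD (by omega)
    omega
  have hright : ∀ z, p + U ≤ z → z < p + V → (p + U ∈ X ↔ z ∈ X) := by
    intro z hpz hzp
    refine mem_iff_mem_of_forall_boundary hpz (hzp.trans_le hpVn) fun m hm hpm => ?_
    have := hD p hpD m (hboundary hm) (by omega)
    omega
  by_cases hpX : p + U ∈ X
  · -- The run outside the cluster of `p` is again in `X`: continue from a far point of it.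
    have hqy : p + 2 * U < y := by
      by_contra! hyp
      exact hyX ((hright y hpUy (by omega)).1 hpX)
    have hq : IsFar D U (p + 2 * U) := by
      intro a ha
      obtain hap | hpa := le_total a p
      · omega
      · have := hD p hpD a ha hpa
        omega
    exact ih _ (by omega) hq hqy ((hright (p + 2 * U) (by omega) (by omega)).1 hpX) rfl
  · exact ⟨p, hVp, hpVn, hleft, fun z hpz hzp hz => hpX ((hright z hpz hzp).2 hz)⟩

lemma IsClustered.exists_isSharpCut (hD : IsClustered D U V) (hU : 0 < U) (hUV : 3 * U ≤ V)
    (hzero : 0 ∈ D) (hn : n ∈ D) (hboundary : boundary n X ⊆ D) (hx : IsFar D U x)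
    (hy : IsFar D U y) (hxn : x < n) (hyn : y < n) (hxX : x ∈ X) (hyX : y ∉ X) :
    ∃ p, IsSharpCut n X U V p ∨ IsSharpCut n Xᶜ U V p := by
  obtain hxy | rfl | hyx := lt_trichotomy x y
  · obtain ⟨p, hp⟩ := hD.exists_isSharpCut_of_lt hU hUV hzero hn hboundary hx hy hxy hyn hxX hyX
    exact ⟨p, .inl hp⟩
  · exact absurd hxX hyX
  · rw [← boundary_compl] at hboundary
    obtain ⟨p, hp⟩ := hD.exists_isSharpCut_of_lt hU hUV hzero hn hboundary hy hx hyx hxn hyX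
      (not_not_intro hxX)
    exact ⟨p, .inr hp⟩

/-- By pigeonhole over scales the exponent `s` is bounded in terms of `N` and `W` alone; this is
where the bound on the two cardinalities comes from. -/
lemma exists_isSharpCut_pow {b N W : ℕ} (hb : 3 ≤ b) (hW : 0 < W) (hN : #(boundary n X) + 2 ≤ N)
    (hX : N * (2 * b ^ (N * N * W)) < (X ∩ Set.Iio n).ncard)
    (hXc : N * (2 * b ^ (N * N * W)) < (Xᶜ ∩ Set.Iio n).ncard) :
    ∃ s p, IsSharpCut n X (b ^ s) (b ^ (s + W)) p ∨ IsSharpCut n Xᶜ (b ^ s) (b ^ (s + W)) p := by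
  set D := insert 0 (insert n (boundary n X))
  have hcard : #D ≤ N := by grind [card_insert_le]
  obtain ⟨t, ht, hD⟩ := exists_isClustered_pow (b := b) (by omega) D W
  have hsmall : #D * (2 * b ^ (t * W)) ≤ N * (2 * b ^ (N * N * W)) := by
    have : t ≤ N * N := ht.trans (Nat.mul_le_mul hcard hcard)
    gcongr
    omega
  obtain ⟨x, ⟨hxX, hxn⟩, hx⟩ := exists_isFar_mem (hsmall.trans_lt hX)
  obtain ⟨y, ⟨hyX, hyn⟩, hy⟩ := exists_isFar_mem (hsmall.trans_lt hXc)
  have hUV : 3 * b ^ (t * W) ≤ b ^ (t * W + W) := by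
    rw [pow_add, mul_comm]
    exact Nat.mul_le_mul_left _ (hb.trans (Nat.le_self_pow hW.ne' b))
  exact ⟨t * W, hD.exists_isSharpCut (by positivity) hUV (by simp [D]) (by simp [D])
    ((subset_insert _ _).trans (subset_insert _ _)) hx hy hxn hyn hxX hyX⟩

end Clustered

theorem stmt_9_general (r : ℕ) :
    ∃ M : ℕ, ∀ (n : ℕ) (A : Set (Fin n)), M < A.ncard → M < Aᶜ.ncard →
      r < biadjRank (limitGraph.comap Fin.val) A Aᶜ := by
  set N := 4 * r + 2
  set T := 2 * r + 1
  refine ⟨N * (2 * 3 ^ (N * N * (3 * T))), fun n A hA hAc => ?_⟩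
  obtain ⟨X, rfl⟩ : ∃ X : Set ℕ, Fin.val ⁻¹' X = A :=
    ⟨Fin.val '' A, Set.preimage_image_eq A Fin.val_injective⟩
  rw [← Set.preimage_compl] at hAc
  rw [← Set.ncard_image_of_injective _ Fin.val_injective, Set.image_preimage_eq_inter_range,
    Fin.range_val] at hA hAc
  change r < cutRank n X
  by_contra! hrank
  have hboundary : #(boundary n X) + 2 ≤ N := by
    have := card_boundary_le n X
    omega
  obtain ⟨s, p, hp | hp⟩ := exists_isSharpCut_pow le_rfl (by omega) hboundary hA hAc
  · have := hp.le_two_mul_cutRank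
    omega
  · have := cutRank_compl n X ▸ hp.le_two_mul_cutRank
    omega

/-- For every natural number `r` there exists `k₀` such that for
every `k ≥ k₀`, every bipartition of the vertex set of `G_k` into sets `A` and `B`
with `|A| ≥ 3^k/3` and `|B| ≥ 3^k/3` has biadjacency matrix over `ℤ/2` of rank
strictly greater than `r`. -/
theorem stmt_9 (r : ℕ) :
    ∃ k₀ : ℕ, ∀ k : ℕ, k₀ ≤ k →
      ∀ A B : Set (Fin (3 ^ k)), A ∪ B = Set.univ → A ∩ B = ∅ →
        (3 : ℝ) ^ k / 3 ≤ (A.ncard : ℝ) → (3 : ℝ) ^ k / 3 ≤ (B.ncard : ℝ) →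
        r < biadjRank (Gk k) A B := by
  obtain ⟨M, hM⟩ := stmt_9_general r
  refine ⟨3 * M, fun k hk A B hAB hdisj hA hB => ?_⟩
  obtain rfl : Aᶜ = B :=
    (isCompl_iff.2 ⟨Set.disjoint_iff_inter_eq_empty.2 hdisj, codisjoint_iff.2 hAB⟩).compl_eq
  have hMk : (M : ℝ) < 3 ^ k / 3 := by
    have : ((3 * M : ℕ) : ℝ) < 3 ^ k := by
      exact_mod_cast hk.trans_lt (Nat.lt_pow_self (by norm_num))
    push_cast at this
    linarith
  rw [gk_eq_comap]
  exact hM (3 ^ k) A (by exact_mod_cast hMk.trans_le hA) (by exact_mod_cast hMk.trans_le hB)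
end

section
/- The graphs G_k have unbounded clique-width: for every natural number r there exists k ≥ 1 such that the clique-width of G_k is strictly greater than r. -/
/-- Clique-width expressions over `c` labels: create a single labelled vertex,
take a disjoint union, relabel all vertices of one label to another label, or
join all pairs consisting of a vertex of one label and one of another label. -/
inductive CW (c : ℕ) : Type where
  | single : Fin c → CW c
  | union : CW c → CW c → CW c
  | relabel : Fin c → Fin c → CW c → CW c
  | join : Fin c → Fin c → CW c → CW c

/-- The vertex type of the labelled graph built by a clique-width expression. -/
def CW.Vt {c : ℕ} : CW c → Type
  | .single _ => Unit
  | .union a b => a.Vt ⊕ b.Vt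
  | .relabel _ _ a => a.Vt
  | .join _ _ a => a.Vt

/-- The labelling of the labelled graph built by a clique-width expression. -/
def CW.label {c : ℕ} : (e : CW c) → e.Vt → Fin c
  | .single l, _ => l
  | .union a _, Sum.inl v => a.label v
  | .union _ b, Sum.inr v => b.label v
  | .relabel x y a, v => if a.label v = x then y else a.label v
  | .join _ _ a, v => a.label v

/-- The adjacency relation of the labelled graph built by a clique-width
expression; the join operation applies only to two *distinct* labels. -/
def CW.adj {c : ℕ} : (e : CW c) → e.Vt → e.Vt → Prop
  | .single _, _, _ => False
  | .union a _, Sum.inl u, Sum.inl v => a.adj u v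
  | .union _ b, Sum.inr u, Sum.inr v => b.adj u v
  | .union _ _, Sum.inl _, Sum.inr _ => False
  | .union _ _, Sum.inr _, Sum.inl _ => False
  | .relabel _ _ a, u, v => a.adj u v
  | .join x y a, u, v =>
      a.adj u v ∨ (x ≠ y ∧ ((a.label u = x ∧ a.label v = y) ∨
        (a.label u = y ∧ a.label v = x)))

/-- The clique-width of a graph `G`: the minimum number `c` of labels for which
some clique-width expression over `c` labels builds a labelled graph whose
underlying graph is isomorphic to `G`. -/
noncomputable def cliqueWidth {V : Type*} (G : SimpleGraph V) : ℕ :=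
  sInf {c : ℕ | ∃ (e : CW c) (φ : V ≃ e.Vt),
    ∀ u v : V, G.Adj u v ↔ e.adj (φ u) (φ v)}

/-!
An expression over `c` labels building `G` has a subexpression whose vertex set `X` contains a
balanced part of any prescribed set of vertices, and the vertices of `X` have at most `c` different
neighbourhoods outside `X`. Call two edges `uv` and `u'v'` across such a cut, with `u` and `u'` on
the same side, linked if `uv'` and `u'v` are edges as well; a cut crossed by many pairwise unlinked
edges forces `c` to be large.

In `G_k`, the edges `{m, m + 1}` are such a family if the path `0, 2, 4, …` of even vertices changes
sides often. If it changes sides only a few times, then, by pigeonhole on the scales `3 ^ t`, there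
is a place `z` and a long interval of scales at which `X` looks like a half-line ending at `z`. At
every few levels in this interval, two consecutive sets `S(i, j)` contain vertices on opposite sides
of `z`, and one of the two vertices lies in no set of a higher level, so that it has no neighbour
further away. The resulting edges across the cut are therefore pairwise unlinked.
-/

theorem ncard_le_ncard_preimage_inl_add_ncard_preimage_inr {α β : Type*} (W : Set (α ⊕ β)) :
    W.ncard ≤ (Sum.inl ⁻¹' W).ncard + (Sum.inr ⁻¹' W).ncard := by
  rw [← Set.ncard_image_of_injective (Sum.inl ⁻¹' W) Sum.inl_injective,
    ← Set.ncard_image_of_injective (Sum.inr ⁻¹' W) Sum.inr_injective]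
  conv_lhs => rw [← Set.image_preimage_inl_union_image_preimage_inr W]
  exact Set.ncard_union_le _ _

namespace CW

variable {c : ℕ} {V : Type*}

/-- The expression `e` builds the graph `G` up to isomorphism. -/
def Builds (e : CW c) (G : SimpleGraph V) : Prop :=
  ∃ φ : V ≃ e.Vt, ∀ u v, G.Adj u v ↔ e.adj (φ u) (φ v)

theorem exists_edgeless [Finite V] [Nonempty V] (ℓ : V → Fin c) :
    ∃ (e : CW c) (φ : V ≃ e.Vt), (∀ v, e.label (φ v) = ℓ v) ∧ ∀ u v, ¬ e.adj (φ u) (φ v) := by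
  suffices h : Nonempty V → ∀ ℓ : V → Fin c, ∃ (e : CW c) (φ : V ≃ e.Vt),
      (∀ v, e.label (φ v) = ℓ v) ∧ ∀ u v, ¬ e.adj (φ u) (φ v) from h ‹_› ℓ
  clear ℓ
  induction V using Finite.induction_empty_option with
  | of_equiv g ih =>
    intro _ ℓ
    obtain ⟨e, φ, hlabel, hadj⟩ := ih g.nonempty (ℓ ∘ g)
    exact ⟨e, g.symm.trans φ, fun v => by simp [hlabel], fun u v => hadj _ _⟩
  | h_empty => exact fun h => h.elim nofun
  | @h_option α _ ih =>
    intro _ ℓ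
    rcases isEmpty_or_nonempty α with _ | hα
    · refine ⟨single (ℓ none), (Equiv.equivPUnit (Option α) : Option α ≃ Unit), fun v => ?_,
        fun _ _ h => h⟩
      exact congrArg ℓ (Subsingleton.elim none v)
    · obtain ⟨e, φ, hlabel, hadj⟩ := ih hα (ℓ ∘ some)
      refine ⟨union e (single (ℓ none)),
        (Equiv.optionEquivSumPUnit α).trans (φ.sumCongr (Equiv.refl Unit)), ?_, ?_⟩
      · rintro (_ | v)
        exacts [rfl, hlabel v]
      · rintro (_ | u) (_ | v)
        exacts [id, id, id, hadj u v]

theorem exists_expr_of_injective [Finite V] [Nonempty V] {ℓ : V → Fin c}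
    (hℓ : Function.Injective ℓ) {E : Finset (V × V)} (hE : ∀ p ∈ E, p.1 ≠ p.2) :
    ∃ (e : CW c) (φ : V ≃ e.Vt), (∀ v, e.label (φ v) = ℓ v) ∧
      ∀ u v, e.adj (φ u) (φ v) ↔ (u, v) ∈ E ∨ (v, u) ∈ E := by
  classical
  induction E using Finset.induction_on with
  | empty =>
    obtain ⟨e, φ, hlabel, hadj⟩ := exists_edgeless ℓ
    exact ⟨e, φ, hlabel, fun u v => by simp [hadj]⟩
  | insert p E _ ih =>
    obtain ⟨e, φ, hlabel, hadj⟩ := ih fun q hq => hE q (Finset.mem_insert_of_mem hq)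
    refine ⟨join (ℓ p.1) (ℓ p.2) e, φ, hlabel, fun u v => ?_⟩
    have hp : ℓ p.1 ≠ ℓ p.2 := hℓ.ne (hE p (Finset.mem_insert_self p E))
    change e.adj (φ u) (φ v) ∨ (ℓ p.1 ≠ ℓ p.2 ∧ ((e.label (φ u) = ℓ p.1 ∧ e.label (φ v) = ℓ p.2) ∨
      (e.label (φ u) = ℓ p.2 ∧ e.label (φ v) = ℓ p.1))) ↔ _
    simp only [hlabel, hadj, hℓ.eq_iff, Finset.mem_insert, Prod.ext_iff]
    tauto

theorem exists_builds [Finite V] [Nonempty V] (G : SimpleGraph V) :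
    ∃ e : CW (Nat.card V), e.Builds G := by
  classical
  have := Fintype.ofFinite V
  obtain ⟨e, φ, -, hadj⟩ := exists_expr_of_injective (Finite.equivFin V).injective
    (E := {p | G.Adj p.1 p.2}) fun p hp => (Finset.mem_filter_univ p).1 hp |>.ne
  exact ⟨e, φ, fun u v => by simp [hadj, G.adj_comm v u]⟩

theorem exists_builds_cliqueWidth [Finite V] [Nonempty V] (G : SimpleGraph V) :
    ∃ e : CW (cliqueWidth G), e.Builds G :=
  Nat.sInf_mem (s := {c | ∃ e : CW c, e.Builds G}) ⟨_, exists_builds G⟩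

/-- The expression `s` is a part of `e` whose vertices sit in `e` through `ι`, and equal labels
in `s` still mean equal labels in `e` and equal adjacencies to the vertices outside `s`. -/
structure IsPart (s e : CW c) (ι : s.Vt → e.Vt) : Prop where
  injective : Function.Injective ι
  label_congr : ∀ ⦃a b⦄, s.label a = s.label b → e.label (ι a) = e.label (ι b)
  adj_congr : ∀ ⦃a b⦄, s.label a = s.label b →
    ∀ v ∉ Set.range ι, (e.adj (ι a) v ↔ e.adj (ι b) v)

namespace IsPart

variable {s a b : CW c} {x y : Fin c}

theorem refl (e : CW c) : IsPart e e id :=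
  ⟨Function.injective_id, fun _ _ h => h, fun _ _ _ v hv => (hv ⟨v, rfl⟩).elim⟩

theorem union_left {ι : s.Vt → a.Vt} (h : IsPart s a ι) :
    IsPart s (union a b) (fun v => Sum.inl (ι v) : s.Vt → a.Vt ⊕ b.Vt) where
  injective := Sum.inl_injective.comp h.injective
  label_congr := h.label_congr
  adj_congr p q hpq := by
    rintro (v | v) hv
    · exact h.adj_congr hpq v fun ⟨w, hw⟩ => hv ⟨w, congrArg Sum.inl hw⟩
    · exact Iff.rfl

theorem union_right {ι : s.Vt → b.Vt} (h : IsPart s b ι) :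
    IsPart s (union a b) (fun v => Sum.inr (ι v) : s.Vt → a.Vt ⊕ b.Vt) where
  injective := Sum.inr_injective.comp h.injective
  label_congr := h.label_congr
  adj_congr p q hpq := by
    rintro (v | v) hv
    · exact Iff.rfl
    · exact h.adj_congr hpq v fun ⟨w, hw⟩ => hv ⟨w, congrArg Sum.inr hw⟩

theorem relabel {ι : s.Vt → a.Vt} (h : IsPart s a ι) : IsPart s (relabel x y a) ι where
  injective := h.injective
  label_congr p q hpq := by
    change (if a.label (ι p) = x then y else a.label (ι p)) =
      if a.label (ι q) = x then y else a.label (ι q)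
    rw [h.label_congr hpq]
  adj_congr := h.adj_congr

theorem join {ι : s.Vt → a.Vt} (h : IsPart s a ι) : IsPart s (join x y a) ι where
  injective := h.injective
  label_congr := h.label_congr
  adj_congr p q hpq v hv :=
    or_congr (h.adj_congr hpq v hv) (by rw [h.label_congr hpq])

end IsPart

theorem exists_isPart_ncard_preimage {θ : ℕ} (hθ : 1 ≤ θ) (e : CW c) (W : Set e.Vt)
    (hW : θ < W.ncard) :
    ∃ (s : CW c) (ι : s.Vt → e.Vt), IsPart s e ι ∧
      θ < (ι ⁻¹' W).ncard ∧ (ι ⁻¹' W).ncard ≤ 2 * θ := by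
  induction e with
  | single l =>
    have : Subsingleton (single l).Vt := inferInstanceAs (Subsingleton Unit)
    exact ⟨_, id, .refl _, hW, (Set.ncard_le_one_of_subsingleton W).trans (by omega)⟩
  | union a b iha ihb =>
    by_cases hsmall : W.ncard ≤ 2 * θ
    · exact ⟨_, id, .refl _, hW, hsmall⟩
    have hsum : W.ncard ≤ (Sum.inl ⁻¹' W).ncard + (Sum.inr ⁻¹' W).ncard :=
      ncard_le_ncard_preimage_inl_add_ncard_preimage_inr W
    rcases (by omega : θ < (Sum.inl ⁻¹' W).ncard ∨ θ < (Sum.inr ⁻¹' W).ncard) with hl | hr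
    · obtain ⟨s, ι, h, hcard⟩ := iha (Sum.inl ⁻¹' W) hl
      exact ⟨s, _, h.union_left, hcard⟩
    · obtain ⟨s, ι, h, hcard⟩ := ihb (Sum.inr ⁻¹' W) hr
      exact ⟨s, _, h.union_right, hcard⟩
  | relabel x y a ih =>
    obtain ⟨s, ι, h, hcard⟩ := ih W hW
    exact ⟨s, ι, h.relabel, hcard⟩
  | join x y a ih =>
    obtain ⟨s, ι, h, hcard⟩ := ih W hW
    exact ⟨s, ι, h.join, hcard⟩

end CW

section CutTypes

variable {V : Type*}

/-- The number of distinct neighbourhoods outside `X` of the vertices of `X`; it is `0` if there are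
infinitely many. -/
noncomputable def cutTypes (G : SimpleGraph V) (X : Set V) : ℕ :=
  ((fun a => G.neighborSet a \ X) '' X).ncard

theorem card_le_cutTypes [Finite V] {ι : Type*} {G : SimpleGraph V} {X : Set V} {I : Finset ι}
    {u v : ι → V} (hu : ∀ i ∈ I, u i ∈ X) (hv : ∀ i ∈ I, v i ∉ X)
    (hadj : ∀ i ∈ I, G.Adj (u i) (v i))
    (hcross : ∀ i ∈ I, ∀ j ∈ I, i ≠ j → ¬ (G.Adj (u i) (v j) ∧ G.Adj (u j) (v i))) :
    I.card ≤ cutTypes G X := by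
  have hinj : Set.InjOn (fun i => G.neighborSet (u i) \ X) I := by
    intro i hi j hj hij
    by_contra hne
    have hmem : ∀ w ∉ X, G.Adj (u i) w ↔ G.Adj (u j) w := fun w hw => by
      simpa [hw] using Set.ext_iff.1 hij w
    exact hcross i hi j hj hne
      ⟨(hmem _ (hv j hj)).2 (hadj j hj), (hmem _ (hv i hi)).1 (hadj i hi)⟩
  rw [← Set.ncard_coe_finset, ← hinj.ncard_image]
  exact Set.ncard_le_ncard (Set.image_subset_iff.2 fun i hi => ⟨u i, hu i hi, rfl⟩)

theorem card_le_two_mul_cutTypes [Finite V] {ι : Type*} {G : SimpleGraph V} {X : Set V}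
    {I : Finset ι} {u v : ι → V} (hsplit : ∀ i ∈ I, (u i ∈ X ↔ v i ∉ X))
    (hadj : ∀ i ∈ I, G.Adj (u i) (v i))
    (hcross : ∀ i ∈ I, ∀ j ∈ I, i ≠ j → (u i ∈ X ↔ u j ∈ X) →
      ¬ (G.Adj (u i) (v j) ∧ G.Adj (u j) (v i))) :
    I.card ≤ 2 * cutTypes G X := by
  classical
  have hin : {i ∈ I | u i ∈ X}.card ≤ cutTypes G X := by
    apply card_le_cutTypes (u := u) (v := v) <;> simp only [Finset.mem_filter]
    · exact fun i hi => hi.2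
    · exact fun i hi => (hsplit i hi.1).1 hi.2
    · exact fun i hi => hadj i hi.1
    · exact fun i hi j hj hij => hcross i hi.1 j hj.1 hij (iff_of_true hi.2 hj.2)
  have hout : {i ∈ I | u i ∉ X}.card ≤ cutTypes G X := by
    apply card_le_cutTypes (u := v) (v := u) <;> simp only [Finset.mem_filter]
    · exact fun i hi => not_not.1 fun h => hi.2 ((hsplit i hi.1).2 h)
    · exact fun i hi => hi.2
    · exact fun i hi => (hadj i hi.1).symm
    · exact fun i hi j hj hij h => hcross i hi.1 j hj.1 hij (iff_of_false hi.2 hj.2)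
        ⟨h.2.symm, h.1.symm⟩
  have := Finset.card_filter_add_card_filter_not (s := I) (fun i => u i ∈ X)
  omega

theorem CW.IsPart.cutTypes_le {c : ℕ} {G : SimpleGraph V} {s e : CW c} {ι : s.Vt → e.Vt}
    (h : s.IsPart e ι) {φ : V ≃ e.Vt} (hφ : ∀ u v, G.Adj u v ↔ e.adj (φ u) (φ v)) :
    cutTypes G (φ ⁻¹' Set.range ι) ≤ c := by
  let outside (p : s.Vt) : Set V := {w | e.adj (ι p) (φ w)} \ φ ⁻¹' Set.range ι
  have hfactors : outside.FactorsThrough s.label := by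
    intro p q hpq
    ext w
    exact and_congr_left fun hw => h.adj_congr hpq (φ w) hw
  let ofLabel : Fin c → Set V := Function.extend s.label outside fun _ => ∅
  have hsub : (fun a => G.neighborSet a \ φ ⁻¹' Set.range ι) '' (φ ⁻¹' Set.range ι) ⊆
      Set.range ofLabel := by
    rintro _ ⟨a, ⟨p, hp⟩, rfl⟩
    refine ⟨s.label p, (hfactors.extend_apply _ p).trans ?_⟩
    ext w
    simp [outside, hp, hφ]
  calc cutTypes G (φ ⁻¹' Set.range ι) ≤ (Set.range ofLabel).ncard := Set.ncard_le_ncard hsub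
    _ ≤ c := by
      simpa [Set.image_univ] using Set.ncard_image_le (f := ofLabel) (s := Set.univ)

theorem CW.Builds.exists_balanced_cut {c θ : ℕ} {G : SimpleGraph V} {e : CW c}
    (he : e.Builds G) (hθ : 1 ≤ θ) {W : Set V} (hW : θ < W.ncard) :
    ∃ X : Set V, cutTypes G X ≤ c ∧ θ < (W ∩ X).ncard ∧ (W ∩ X).ncard ≤ 2 * θ := by
  obtain ⟨φ, hφ⟩ := he
  have himage : (φ '' W).ncard = W.ncard := Set.ncard_image_of_injective W φ.injective
  obtain ⟨s, ι, hs, hcard⟩ := e.exists_isPart_ncard_preimage hθ (φ '' W) (himage ▸ hW)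
  have hpreimage : (W ∩ φ ⁻¹' Set.range ι).ncard = (ι ⁻¹' (φ '' W)).ncard := by
    rw [← Set.ncard_image_of_injective _ φ.injective, Set.image_inter_preimage,
      ← Set.image_preimage_eq_inter_range, Set.ncard_image_of_injective _ hs.injective]
  exact ⟨φ ⁻¹' Set.range ι, hs.cutTypes_le hφ, hpreimage ▸ hcard⟩

end CutTypes

section Scales

variable {M : Finset ℕ} {S T : ℕ}

/-- No two points of `M` are at a distance in `[S, T)`. -/
def HasGap (M : Finset ℕ) (S T : ℕ) : Prop :=
  ∀ p ∈ M, ∀ q ∈ M, p + S ≤ q → p + T ≤ q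

/-- Every point of `M` is at distance at least `S` from `x`. -/
def FarFrom (M : Finset ℕ) (S x : ℕ) : Prop :=
  ∀ p ∈ M, p + S ≤ x ∨ x + S ≤ p

/-- At the scales between `S` and `T`, the colouring `col` takes one value to the left of `z` and
the opposite one to the right of `z`. -/
def IsSwitch (col : ℕ → Prop) (S T z : ℕ) : Prop :=
  ∀ ⦃w w'⦄, z < w + T → w + S ≤ z → z + S ≤ w' → w' < z + T → (col w ↔ ¬ col w')

theorem exists_hasGap {s : ℕ → ℕ} (hs : Monotone s) (M : Finset ℕ) :
    ∃ q ≤ M.card * M.card, HasGap M (s q) (s (q + 1)) := by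
  by_contra! hnone
  have hpair : ∀ q ≤ M.card * M.card, ∃ d : ℕ × ℕ, d ∈ M ×ˢ M ∧
      d.1 + s q ≤ d.2 ∧ d.2 < d.1 + s (q + 1) := by
    intro q hq
    simpa [HasGap, and_assoc] using hnone q hq
  choose! d hd hlow hhigh using hpair
  have hinj : Set.InjOn d (Finset.range (M.card * M.card + 1)) := by
    intro q hq q' hq' heq
    simp only [Finset.coe_range, Set.mem_Iio, Nat.lt_succ_iff] at hq hq'
    wlog hlt : q < q' generalizing q q'
    · rcases (not_lt.1 hlt).eq_or_lt with h | h
      exacts [h.symm, (this heq.symm hq' hq h).symm]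
    have := hhigh q hq
    have := hlow q' hq'
    have := hs (Nat.succ_le_of_lt hlt)
    simp only [heq, Nat.succ_eq_add_one] at *
    omega
  have := Finset.card_le_card_of_injOn d
    (fun q hq => hd q (Nat.lt_succ_iff.1 (Finset.mem_range.1 hq))) hinj
  rw [Finset.card_range, Finset.card_product] at this
  omega

theorem exists_farFrom {W : Set ℕ} (hW : M.card * (2 * S) < W.ncard) : ∃ x ∈ W, FarFrom M S x := by
  by_contra! hnone
  have hsub : W ⊆ M.biUnion fun p => Finset.Ico (p - S) (p + S) := by
    intro x hx
    obtain ⟨p, hp, hpx⟩ : ∃ p ∈ M, ¬ (p + S ≤ x ∨ x + S ≤ p) := by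
      simpa [FarFrom] using hnone x hx
    simp only [Finset.coe_biUnion, Set.mem_iUnion, Finset.coe_Ico, Set.mem_Ico]
    exact ⟨p, hp, by omega, by omega⟩
  have hcard := Finset.card_biUnion_le_card_mul M (fun p => Finset.Ico (p - S) (p + S)) (2 * S)
    fun p _ => by rw [Nat.card_Ico]; omega
  have := Set.ncard_le_ncard hsub (Finset.finite_toSet _)
  rw [Set.ncard_coe_finset] at this
  omega

theorem iff_of_forall_iff_succ {col : ℕ → Prop} {a b : ℕ} (hab : a ≤ b)
    (h : ∀ p, a ≤ p → p < b → (col p ↔ col (p + 1))) : col a ↔ col b := by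
  induction b, hab using Nat.le_induction with
  | base => rfl
  | succ b hab ih =>
    exact (ih fun p hap hpb => h p hap (by omega)).trans (h b hab b.lt_succ_self)

theorem iff_of_forall_lt_iff_lt {col : ℕ → Prop} {h a b : ℕ}
    (hM : ∀ p < h, ¬ (col p ↔ col (p + 1)) → p ∈ M) (ha : a ≤ h) (hb : b ≤ h)
    (hab : ∀ p ∈ M, p < a ↔ p < b) : col a ↔ col b := by
  wlog hle : a ≤ b generalizing a b
  · exact (this hb ha (fun p hp => (hab p hp).symm) (not_le.1 hle).le).symm
  refine iff_of_forall_iff_succ hle fun p hap hpb => ?_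
  by_contra hne
  exact hap.not_gt ((hab p (hM p (by omega) hne)).2 hpb)

theorem exists_consecutive_of_not_iff {P col : ℕ → Prop} {x y : ℕ} (hxy : x < y) (hx : P x)
    (hy : P y) (hcol : ¬ (col x ↔ col y)) :
    ∃ x' y', x' < y' ∧ y' ≤ y ∧ P x' ∧ P y' ∧ ¬ (col x' ↔ col y') ∧
      ∀ w, x' < w → w < y' → ¬ P w := by
  induction hd : y - x using Nat.strong_induction_on generalizing x y with
  | _ d ih =>
    by_cases hnone : ∀ w, x < w → w < y → ¬ P w
    · exact ⟨x, y, hxy, le_rfl, hx, hy, hcol, hnone⟩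
    push Not at hnone
    obtain ⟨w, hxw, hwy, hw⟩ := hnone
    by_cases hcw : col x ↔ col w
    · exact ih (y - w) (by omega) hwy hw hy (fun h => hcol (hcw.trans h)) rfl
    · obtain ⟨x', y', hlt, hle, h⟩ := ih (w - x) (by omega) hxw hx hw hcw rfl
      exact ⟨x', y', hlt, hle.trans hwy.le, h⟩

theorem exists_mem_near_of_consecutive {col : ℕ → Prop} {h x y : ℕ} (hS : 1 ≤ S)
    (hST : 3 * S ≤ T) (hgap : HasGap M S T)
    (hM : ∀ p < h, ¬ (col p ↔ col (p + 1)) → p ∈ M) (hxy : x < y) (hy : y ≤ h)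
    (hxM : FarFrom M S x) (hyM : FarFrom M S y) (hcol : ¬ (col x ↔ col y))
    (hnone : ∀ w, x < w → w < y → ¬ FarFrom M S w) :
    ∃ z ∈ M, (x + S ≤ z ∧ z ≤ x + 2 * S) ∧ z + S ≤ y ∧ y ≤ z + 2 * S := by
  obtain ⟨z, hz, hxz, hzy⟩ : ∃ z ∈ M, x ≤ z ∧ z < y := by
    by_contra! hbetween
    refine hcol (iff_of_forall_lt_iff_lt hM (by omega) (by omega) fun p hp => ?_)
    have := hbetween p hp
    omega
  have hxz' : x + S ≤ z := by have := hxM z hz; omega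
  have hzy' : z + S ≤ y := by have := hyM z hz; omega
  refine ⟨z, hz, ⟨hxz', ?_⟩, hzy', ?_⟩ <;> by_contra! hlt
  · refine hnone (z - 2 * S) (by omega) (by omega) fun p hp => ?_
    have := hgap p hp z hz
    omega
  · refine hnone (z + 2 * S) (by omega) (by omega) fun p hp => ?_
    have := hgap z hz p hp
    omega

theorem isSwitch_of_near {col : ℕ → Prop} {h x y z : ℕ} (hST : 2 * S < T)
    (hgap : HasGap M S T) (hM : ∀ p < h, ¬ (col p ↔ col (p + 1)) → p ∈ M) (hz : z ∈ M)
    (hzh : z + T ≤ h) (hx : x + S ≤ z ∧ z ≤ x + 2 * S) (hy : z + S ≤ y ∧ y ≤ z + 2 * S)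
    (hcol : ¬ (col x ↔ col y)) : IsSwitch col S T z := by
  intro w w' hwT hwS hwS' hwT'
  have hwx : col w ↔ col x := iff_of_forall_lt_iff_lt hM (by omega) (by omega) fun p hp => by
    have := hgap p hp z hz
    omega
  have hwy : col w' ↔ col y := iff_of_forall_lt_iff_lt hM (by omega) (by omega) fun p hp => by
    have := hgap z hz p hp
    omega
  rw [hwx, hwy]
  tauto

theorem exists_isSwitch_of_lt {col : ℕ → Prop} {h x y : ℕ} (hS : 1 ≤ S) (hST : 3 * S ≤ T)
    (hgap : HasGap M S T) (h0 : 0 ∈ M) (hh : h ∈ M)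
    (hM : ∀ p < h, ¬ (col p ↔ col (p + 1)) → p ∈ M) (hxy : x < y) (hy : y ≤ h)
    (hxM : FarFrom M S x) (hyM : FarFrom M S y) (hcol : ¬ (col x ↔ col y)) :
    ∃ z, T ≤ z ∧ z + T ≤ h ∧ IsSwitch col S T z := by
  obtain ⟨x', y', hxy', hyy', hxM', hyM', hcol', hnone⟩ :=
    exists_consecutive_of_not_iff hxy hxM hyM hcol
  obtain ⟨z, hz, hx', hy'⟩ :=
    exists_mem_near_of_consecutive hS hST hgap hM hxy' (by omega) hxM' hyM' hcol' hnone
  have hTz : T ≤ z := by simpa using hgap 0 h0 z hz (by omega)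
  have hzh : z + T ≤ h := hgap z hz h hh (by omega)
  exact ⟨z, hTz, hzh, isSwitch_of_near (by omega) hgap hM hz hzh hx' hy' hcol'⟩

theorem exists_isSwitch {col : ℕ → Prop} {h x y : ℕ} (hS : 1 ≤ S) (hST : 3 * S ≤ T)
    (hgap : HasGap M S T) (h0 : 0 ∈ M) (hh : h ∈ M)
    (hM : ∀ p < h, ¬ (col p ↔ col (p + 1)) → p ∈ M) (hx : x ≤ h) (hy : y ≤ h)
    (hxM : FarFrom M S x) (hyM : FarFrom M S y) (hcol : ¬ (col x ↔ col y)) :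
    ∃ z, T ≤ z ∧ z + T ≤ h ∧ IsSwitch col S T z := by
  rcases lt_trichotomy x y with hlt | rfl | hlt
  · exact exists_isSwitch_of_lt hS hST hgap h0 hh hM hlt hy hxM hyM hcol
  · exact (hcol Iff.rfl).elim
  · exact exists_isSwitch_of_lt hS hST hgap h0 hh hM hlt hx hyM hxM fun h => hcol h.symm

end Scales

section Sset

theorem mem_Sset_iff {i j y : ℕ} :
    y ∈ Sset i j ↔ Even y ∧ y / 2 / 3 ^ i = j ∧ ∀ l < i, y / 2 / 3 ^ l % 3 ≠ 2 := by
  induction i generalizing j with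
  | zero =>
    simp only [Sset, Finset.mem_singleton, Nat.even_iff, pow_zero, Nat.div_one, Nat.not_lt_zero,
      false_implies, implies_true, and_true]
    omega
  | succ i ih =>
    have hdiv : y / 2 / 3 ^ (i + 1) = y / 2 / 3 ^ i / 3 := by
      rw [pow_succ, ← Nat.div_div_eq_div_mul]
    simp only [Sset, Finset.mem_union, ih, Nat.forall_lt_succ_right, hdiv]
    have hdigit : y / 2 / 3 ^ i / 3 = j ∧ y / 2 / 3 ^ i % 3 ≠ 2 ↔
        y / 2 / 3 ^ i = 3 * j ∨ y / 2 / 3 ^ i = 3 * j + 1 := by omega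
    tauto

theorem two_mul_pow_mul_mem_Sset (i j : ℕ) : 2 * (3 ^ i * j) ∈ Sset i j := by
  induction i generalizing j with
  | zero => simp [Sset]
  | succ i ih =>
    rw [pow_succ, mul_assoc]
    exact Finset.mem_union_left _ (ih (3 * j))

theorem Sset_subset_Sset_succ {i j : ℕ} (hj : j % 3 ≠ 2) : Sset i j ⊆ Sset (i + 1) (j / 3) := by
  obtain h | h : 3 * (j / 3) = j ∨ 3 * (j / 3) + 1 = j := by omega
  · exact (congrArg (Sset i) h).superset.trans Finset.subset_union_left
  · exact (congrArg (Sset i) h).superset.trans Finset.subset_union_right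

end Sset

namespace Gk

variable {k : ℕ} {u v : Fin (3 ^ k)}

theorem adj_of_add_one_eq (h : (u : ℕ) + 1 = v) : (Gk k).Adj u v :=
  (SimpleGraph.fromRel_adj _ _ _).2 ⟨fun huv => by simp [huv] at h, .inl (.inl h)⟩

theorem adj_of_mem_Sset {i j : ℕ} (hu : (u : ℕ) ∈ Sset i j) (hv : (v : ℕ) ∈ Sset i (j + 1))
    (hi : i < k) : (Gk k).Adj u v := by
  have hdivu := (mem_Sset_iff.1 hu).2.1
  have hdivv := (mem_Sset_iff.1 hv).2.1
  refine (SimpleGraph.fromRel_adj _ _ _).2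
    ⟨fun huv => by rw [huv] at hdivu; omega, .inl (.inr ⟨i, hi, j, ?_, hu, hv⟩)⟩
  have hlt : (v : ℕ) / 2 / 3 ^ i * 2 < 3 ^ (k - i) := by
    rw [← Nat.mul_lt_mul_left (a := 3 ^ i) (by positivity), pow_mul_pow_sub 3 hi.le]
    have := Nat.mul_div_le ((v : ℕ) / 2) (3 ^ i)
    rw [← mul_assoc]
    omega
  omega

theorem succ_eq_of_adj_of_odd (h : (Gk k).Adj u v) (hu : Odd (u : ℕ)) :
    (u : ℕ) + 1 = v ∨ (v : ℕ) + 1 = u := by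
  obtain ⟨-, (h | ⟨i, -, j, -, hui, -⟩) | (h | ⟨i, -, j, -, -, hui⟩)⟩ :=
    (SimpleGraph.fromRel_adj _ _ _).1 h
  · exact .inl h
  · exact (Nat.not_even_iff_odd.2 hu (mem_Sset_iff.1 hui).1).elim
  · exact .inr h
  · exact (Nat.not_even_iff_odd.2 hu (mem_Sset_iff.1 hui).1).elim

theorem half_lt_add_of_adj {l : ℕ} (h : (Gk k).Adj u v)
    (hu : (u : ℕ) / 2 / 3 ^ l % 3 = 2) :
    (u : ℕ) / 2 < (v : ℕ) / 2 + 2 * 3 ^ l ∧ (v : ℕ) / 2 < (u : ℕ) / 2 + 2 * 3 ^ l := by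
  have hpos : 0 < 3 ^ l := by positivity
  have hpow {i j : ℕ} (hmem : (u : ℕ) ∈ Sset i j) : 3 ^ i ≤ 3 ^ l :=
    Nat.pow_le_pow_right three_pos (not_lt.1 fun hl => (mem_Sset_iff.1 hmem).2.2 l hl hu)
  have hnear {i j a b : ℕ} (ha : a ∈ Sset i j) (hb : b ∈ Sset i (j + 1)) :
      a / 2 < b / 2 ∧ b / 2 < a / 2 + 2 * 3 ^ i := by
    have hdiva := (mem_Sset_iff.1 ha).2.1
    have hdivb := (mem_Sset_iff.1 hb).2.1
    have := (Nat.div_eq_iff (by positivity)).1 hdiva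
    have := (Nat.div_eq_iff (by positivity)).1 hdivb
    have : 0 < 3 ^ i := by positivity
    have : (j + 1) * 3 ^ i = j * 3 ^ i + 3 ^ i := add_one_mul _ _
    omega
  obtain ⟨-, (h | ⟨i, -, j, -, hui, hvi⟩) | (h | ⟨i, -, j, -, hvi, hui⟩)⟩ :=
    (SimpleGraph.fromRel_adj _ _ _).1 h
  · omega
  · have := hnear hui hvi
    have := hpow hui
    omega
  · omega
  · have := hnear hvi hui
    have := hpow hui
    omega

/-- The vertex `2x` of `G_k`, for `x ≤ 3 ^ k / 2`; beyond that range it wraps around. -/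
def evenVertex (k x : ℕ) : Fin (3 ^ k) := Fin.ofNat (3 ^ k) (2 * x)

/-- The vertex `2x + 1` of `G_k`, for `x < 3 ^ k / 2`; beyond that range it wraps around. -/
def oddVertex (k x : ℕ) : Fin (3 ^ k) := Fin.ofNat (3 ^ k) (2 * x + 1)

theorem two_mul_half_add_one (k : ℕ) : 2 * (3 ^ k / 2) + 1 = 3 ^ k :=
  Nat.two_mul_div_two_add_one_of_odd (Odd.pow (by decide))

theorem val_evenVertex {x : ℕ} (hx : x ≤ 3 ^ k / 2) : (evenVertex k x : ℕ) = 2 * x :=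
  Nat.mod_eq_of_lt (by have := two_mul_half_add_one k; omega)

theorem val_oddVertex {x : ℕ} (hx : x < 3 ^ k / 2) : (oddVertex k x : ℕ) = 2 * x + 1 :=
  Nat.mod_eq_of_lt (by have := two_mul_half_add_one k; omega)

theorem injOn_evenVertex (k : ℕ) : Set.InjOn (evenVertex k) (Set.Iic (3 ^ k / 2)) := by
  intro x hx y hy hxy
  have := congrArg Fin.val hxy
  rw [val_evenVertex hx, val_evenVertex hy] at this
  omega

/-- The even vertices of `G_k`. -/
def evenVertices (k : ℕ) : Set (Fin (3 ^ k)) := evenVertex k '' Set.Iic (3 ^ k / 2)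

theorem ncard_evenVertices_inter (X : Set (Fin (3 ^ k))) :
    (evenVertices k ∩ X).ncard = (Set.Iic (3 ^ k / 2) ∩ evenVertex k ⁻¹' X).ncard := by
  rw [evenVertices, ← Set.image_inter_preimage]
  exact ((injOn_evenVertex k).mono Set.inter_subset_left).ncard_image

theorem ncard_evenVertices (k : ℕ) : (evenVertices k).ncard = 3 ^ k / 2 + 1 := by
  simpa using ncard_evenVertices_inter (k := k) Set.univ

theorem three_mul_lt_ncard_evenVertices (hk : 2 ≤ k) :
    3 * 3 ^ (k - 2) < (evenVertices k).ncard := by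
  have hpow : 3 ^ (k - 2) * 3 ^ 2 = 3 ^ k := pow_sub_mul_pow 3 hk
  rw [ncard_evenVertices]
  omega

theorem card_le_of_forall_odd_split {X : Set (Fin (3 ^ k))} {D : Finset ℕ} {d : ℕ} (hd : d ≤ 1)
    (hD : ∀ x ∈ D, x < 3 ^ k / 2)
    (hsplit : ∀ x ∈ D, (oddVertex k x ∈ X ↔ evenVertex k (x + d) ∉ X)) :
    D.card ≤ 2 * cutTypes (Gk k) X := by
  have hodd : ∀ x ∈ D, (oddVertex k x : ℕ) = 2 * x + 1 := fun x hx => val_oddVertex (hD x hx)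
  have heven : ∀ x ∈ D, (evenVertex k (x + d) : ℕ) = 2 * (x + d) := fun x hx =>
    val_evenVertex (by have := hD x hx; omega)
  refine card_le_two_mul_cutTypes hsplit (fun x hx => ?_) fun x hx y hy hxy _ ⟨hadj, hadj'⟩ => ?_
  · obtain rfl | rfl := Nat.le_one_iff_eq_zero_or_eq_one.1 hd
    · exact (adj_of_add_one_eq (by rw [heven x hx, hodd x hx, add_zero])).symm
    · exact adj_of_add_one_eq (by rw [heven x hx, hodd x hx]; ring)
  · have hxy' := succ_eq_of_adj_of_odd hadj ⟨x, hodd x hx⟩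
    have hyx' := succ_eq_of_adj_of_odd hadj' ⟨y, hodd y hy⟩
    rw [hodd x hx, heven y hy] at hxy'
    rw [hodd y hy, heven x hx] at hyx'
    omega

theorem card_le_of_forall_even_split {X : Set (Fin (3 ^ k))} {D : Finset ℕ}
    (hD : ∀ x ∈ D, x < 3 ^ k / 2)
    (hsplit : ∀ x ∈ D, ¬ (evenVertex k x ∈ X ↔ evenVertex k (x + 1) ∈ X)) :
    D.card ≤ 4 * cutTypes (Gk k) X := by
  classical
  have hleft : {x ∈ D | oddVertex k x ∈ X ↔ evenVertex k x ∉ X}.card ≤ 2 * cutTypes (Gk k) X :=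
    card_le_of_forall_odd_split zero_le_one (fun x hx => hD x (Finset.mem_filter.1 hx).1)
      fun x hx => (Finset.mem_filter.1 hx).2
  have hright : {x ∈ D | ¬ (oddVertex k x ∈ X ↔ evenVertex k x ∉ X)}.card ≤
      2 * cutTypes (Gk k) X := by
    refine card_le_of_forall_odd_split le_rfl (fun x hx => hD x (Finset.mem_filter.1 hx).1)
      fun x hx => ?_
    have := hsplit x (Finset.mem_filter.1 hx).1
    have := (Finset.mem_filter.1 hx).2
    tauto
  have := Finset.card_filter_add_card_filter_not (s := D)
    (fun x => oddVertex k x ∈ X ↔ evenVertex k x ∉ X)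
  omega

/-- The even vertices `2u` and `2v` lie in consecutive blocks of level `l + 2` and on opposite
sides of `2z`, at a half-distance from it between `3 ^ l` and `18 * 3 ^ l`. The digit condition
forbids `2u` from lying in any block of a level above `l + 2`. -/
structure IsStraddlingPair (l z u v : ℕ) : Prop where
  digit_eq_two : u / 3 ^ (l + 2) % 3 = 2
  blocks : ∃ j, 2 * u ∈ Sset (l + 2) j ∧ 2 * v ∈ Sset (l + 2) (j + 1) ∨
    2 * v ∈ Sset (l + 2) j ∧ 2 * u ∈ Sset (l + 2) (j + 1)
  left_near : z ≤ u + 18 * 3 ^ l ∧ u ≤ z + 18 * 3 ^ l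
  right_near : z ≤ v + 18 * 3 ^ l ∧ v ≤ z + 18 * 3 ^ l
  opposite : u + 3 ^ l ≤ z ∧ z + 3 ^ l ≤ v ∨ v + 3 ^ l ≤ z ∧ z + 3 ^ l ≤ u

theorem isStraddlingPair_pow_mul {l z p q : ℕ} (hp : p % 3 ≠ 2 ∧ p / 3 % 3 ≠ 2)
    (hq : q % 3 ≠ 2 ∧ q / 3 % 3 ≠ 2) (hdigit : p / 3 / 3 % 3 = 2)
    (hblocks : p / 3 / 3 + 1 = q / 3 / 3 ∨ q / 3 / 3 + 1 = p / 3 / 3)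
    (hpz : z / 3 ^ l < p + 18 ∧ p ≤ z / 3 ^ l + 18) (hqz : z / 3 ^ l < q + 18 ∧ q ≤ z / 3 ^ l + 18)
    (hopp : p < z / 3 ^ l ∧ z / 3 ^ l + 1 < q ∨ q < z / 3 ^ l ∧ z / 3 ^ l + 1 < p) :
    IsStraddlingPair l z (3 ^ l * p) (3 ^ l * q) := by
  have hpos : 0 < 3 ^ l := by positivity
  have hmem {n : ℕ} (hn : n % 3 ≠ 2 ∧ n / 3 % 3 ≠ 2) : 2 * (3 ^ l * n) ∈ Sset (l + 2) (n / 3 / 3) :=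
    Sset_subset_Sset_succ hn.2 (Sset_subset_Sset_succ hn.1 (two_mul_pow_mul_mem_Sset l n))
  have hle {n m : ℕ} (h : n ≤ z / 3 ^ l + m) : 3 ^ l * n ≤ z + m * 3 ^ l := by
    rwa [← Nat.add_mul_div_right _ _ hpos, Nat.le_div_iff_mul_le hpos, mul_comm n] at h
  have hlt {n m : ℕ} (h : z / 3 ^ l + m < n) : z + m * 3 ^ l < 3 ^ l * n := by
    rwa [← Nat.add_mul_div_right _ _ hpos, Nat.div_lt_iff_lt_mul hpos, mul_comm n] at h
  have hnear {n : ℕ} (h : z / 3 ^ l < n + 18 ∧ n ≤ z / 3 ^ l + 18) :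
      z ≤ 3 ^ l * n + 18 * 3 ^ l ∧ 3 ^ l * n ≤ z + 18 * 3 ^ l :=
    ⟨by have := hlt (m := 0) h.1; rw [mul_add] at this; omega, hle h.2⟩
  have hsides {n m : ℕ} (h : n < z / 3 ^ l ∧ z / 3 ^ l + 1 < m) :
      3 ^ l * n + 3 ^ l ≤ z ∧ z + 3 ^ l ≤ 3 ^ l * m := by
    have := hle (m := 0) h.1
    have := hlt h.2
    rw [Nat.succ_eq_add_one, mul_add] at *
    omega
  refine ⟨?_, ?_, hnear hpz, hnear hqz, hopp.imp hsides hsides⟩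
  · rwa [pow_add, ← Nat.div_div_eq_div_mul, Nat.mul_div_cancel_left _ hpos,
      show 3 ^ 2 = 3 * 3 from rfl, ← Nat.div_div_eq_div_mul]
  · rcases hblocks with h | h
    · exact ⟨_, .inl ⟨hmem hp, h ▸ hmem hq⟩⟩
    · exact ⟨_, .inr ⟨hmem hq, h ▸ hmem hp⟩⟩

theorem exists_isStraddlingPair_of_digits {l z : ℕ} (hz : 9 ≤ z / 3 ^ l)
    (h0 : ¬ (z / 3 ^ l / 9 % 3 = 0 ∧ 3 ≤ z / 3 ^ l % 9))
    (h1 : ¬ (z / 3 ^ l / 9 % 3 = 1 ∧ z / 3 ^ l % 9 = 0)) : ∃ u v, IsStraddlingPair l z u v := by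
  have hpair := @isStraddlingPair_pow_mul l z
  generalize z / 3 ^ l = n at *
  obtain hc | hc | hc : n / 9 % 3 = 0 ∨ n / 9 % 3 = 1 ∨ n / 9 % 3 = 2 := by omega
  · exact ⟨_, _, @hpair (9 * (n / 9) - 9) (9 * (n / 9) + 4)
      (by omega) (by omega) (by omega) (by omega) (by omega) (by omega) (by omega)⟩
  · exact ⟨_, _, @hpair (9 * (n / 9) + 12) (9 * (n / 9))
      (by omega) (by omega) (by omega) (by omega) (by omega) (by omega) (by omega)⟩
  · rcases Nat.eq_zero_or_pos (n % 9) with he | he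
    · exact ⟨_, _, @hpair (9 * (n / 9) + 3) (9 * (n / 9) - 9)
        (by omega) (by omega) (by omega) (by omega) (by omega) (by omega) (by omega)⟩
    · exact ⟨_, _, @hpair (9 * (n / 9)) (9 * (n / 9) + 12)
        (by omega) (by omega) (by omega) (by omega) (by omega) (by omega) (by omega)⟩

theorem exists_isStraddlingPair {i z : ℕ} (hz : 81 * 3 ^ i ≤ z) :
    ∃ l, i ≤ l ∧ l ≤ i + 2 ∧ ∃ u v, IsStraddlingPair l z u v := by
  have hZ : 81 ≤ z / 3 ^ i := (Nat.le_div_iff_mul_le (by positivity)).2 hz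
  have hpair₀ := @exists_isStraddlingPair_of_digits i z
  have hpair₁ := @exists_isStraddlingPair_of_digits (i + 1) z
  have hpair₂ := @exists_isStraddlingPair_of_digits (i + 2) z
  rw [pow_add, ← Nat.div_div_eq_div_mul] at hpair₁ hpair₂
  by_contra hall
  have hnone (l : ℕ) (hl : i ≤ l ∧ l ≤ i + 2) : ¬ ∃ u v, IsStraddlingPair l z u v :=
    fun h => hall ⟨l, hl.1, hl.2, h⟩
  have := hnone i (by omega)
  have := hnone (i + 1) (by omega)
  have := hnone (i + 2) (by omega)
  -- The digit patterns for which the three levels fail are incompatible.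
  grind

namespace IsStraddlingPair

variable {l z x y : ℕ}

theorem adj (h : IsStraddlingPair l z x y) (hl : l + 2 < k) (hx : x ≤ 3 ^ k / 2)
    (hy : y ≤ 3 ^ k / 2) : (Gk k).Adj (evenVertex k x) (evenVertex k y) := by
  obtain ⟨j, ⟨hxj, hyj⟩ | ⟨hyj, hxj⟩⟩ := h.blocks
  · exact adj_of_mem_Sset (val_evenVertex hx ▸ hxj) (val_evenVertex hy ▸ hyj) hl
  · exact (adj_of_mem_Sset (val_evenVertex hy ▸ hyj) (val_evenVertex hx ▸ hxj) hl).symm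

theorem not_adj {l' x' y' : ℕ} (h : IsStraddlingPair l z x y) (h' : IsStraddlingPair l' z x' y')
    (hl : l + 3 ≤ l') (hx : x ≤ 3 ^ k / 2) (hy : y' ≤ 3 ^ k / 2) (hside : x < z ↔ x' < z) :
    ¬ (Gk k).Adj (evenVertex k x) (evenVertex k y') := by
  intro hadj
  have hxval : (evenVertex k x : ℕ) / 2 = x := by rw [val_evenVertex hx]; omega
  have hyval : (evenVertex k y' : ℕ) / 2 = y' := by rw [val_evenVertex hy]; omega
  have hnear := half_lt_add_of_adj hadj (by rw [hxval]; exact h.digit_eq_two)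
  rw [hxval, hyval, pow_add] at hnear
  have hpow : 3 ^ l * 3 ^ 3 ≤ 3 ^ l' := by
    rw [← pow_add]
    exact Nat.pow_le_pow_right three_pos hl
  have := h.opposite
  have := h'.opposite
  have : 0 < 3 ^ l := by positivity
  omega

variable {col : ℕ → Prop} {S T : ℕ}

theorem iff_not (h : IsStraddlingPair l z x y) (hz : IsSwitch col S T z) (hS : S ≤ 3 ^ l)
    (hT : 18 * 3 ^ l < T) : col x ↔ ¬ col y := by
  have := h.left_near
  have := h.right_near
  rcases h.opposite with hlt | hlt
  · exact hz (by omega) (by omega) (by omega) (by omega)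
  · have := hz (w := y) (w' := x) (by omega) (by omega) (by omega) (by omega)
    tauto

theorem lt_iff_lt {l' x' y' : ℕ} (h : IsStraddlingPair l z x y)
    (h' : IsStraddlingPair l' z x' y') (hz : IsSwitch col S T z) (hS : S ≤ 3 ^ l)
    (hT : 18 * 3 ^ l < T) (hS' : S ≤ 3 ^ l') (hT' : 18 * 3 ^ l' < T) (hcol : col x ↔ col x') :
    x < z ↔ x' < z := by
  have := h.left_near
  have := h'.left_near
  have := h.opposite
  have := h'.opposite
  by_contra hne
  rcases lt_or_ge x z with hlt | hge
  · have := hz (w := x) (w' := x') (by omega) (by omega) (by omega) (by omega)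
    tauto
  · have := hz (w := x') (w' := x) (by omega) (by omega) (by omega) (by omega)
    tauto

end IsStraddlingPair

theorem le_two_mul_cutTypes_of_isStraddlingPair {X : Set (Fin (3 ^ k))} {S T n z : ℕ}
    {l x y : ℕ → ℕ} (hz : IsSwitch (fun x => evenVertex k x ∈ X) S T z)
    (hright : z + T ≤ 3 ^ k / 2) (hpair : ∀ q < n, IsStraddlingPair (l q) z (x q) (y q))
    (hsep : ∀ q q', q < q' → q' < n → l q + 3 ≤ l q') (hS : ∀ q < n, S ≤ 3 ^ l q)
    (hT : ∀ q < n, 18 * 3 ^ l q < T) : n ≤ 2 * cutTypes (Gk k) X := by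
  have hx : ∀ q < n, x q ≤ 3 ^ k / 2 := fun q hq => by
    have := (hpair q hq).left_near
    have := hT q hq
    omega
  have hy : ∀ q < n, y q ≤ 3 ^ k / 2 := fun q hq => by
    have := (hpair q hq).right_near
    have := hT q hq
    omega
  rw [← Finset.card_range n]
  apply card_le_two_mul_cutTypes (u := fun q => evenVertex k (x q))
    (v := fun q => evenVertex k (y q)) <;> simp only [Finset.mem_range]
  · exact fun q hq => (hpair q hq).iff_not hz (hS q hq) (hT q hq)
  · intro q hq
    have hlevel : 3 ^ (l q + 2) < 3 ^ k := by
      have := hT q hq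
      rw [pow_add]
      omega
    exact (hpair q hq).adj ((Nat.pow_lt_pow_iff_right (by norm_num)).1 hlevel) (hx q hq) (hy q hq)
  · intro q hq q' hq' hne hcol
    have hside := (hpair q hq).lt_iff_lt (hpair q' hq') hz (hS q hq) (hT q hq) (hS q' hq')
      (hT q' hq') hcol
    rcases lt_or_gt_of_ne hne with hlt | hlt
    · exact fun h => (hpair q hq).not_adj (hpair q' hq') (hsep q q' hlt hq') (hx q hq)
        (hy q' hq') hside h.1
    · exact fun h => (hpair q' hq').not_adj (hpair q hq) (hsep q' q hlt hq) (hx q' hq')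
        (hy q hq) hside.symm h.2

theorem le_two_mul_cutTypes_of_isSwitch {X : Set (Fin (3 ^ k))} {t n z : ℕ}
    (hz : IsSwitch (fun x => evenVertex k x ∈ X) (3 ^ t) (3 ^ (t + 6 * n)) z)
    (hleft : 3 ^ (t + 6 * n) ≤ z) (hright : z + 3 ^ (t + 6 * n) ≤ 3 ^ k / 2) :
    n ≤ 2 * cutTypes (Gk k) X := by
  have hpair : ∀ q < n, ∃ l x y, t + 6 * q ≤ l ∧ l ≤ t + 6 * q + 2 ∧ IsStraddlingPair l z x y := by
    intro q hq
    have hpow : 3 ^ (t + 6 * q + 4) ≤ 3 ^ (t + 6 * n) :=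
      Nat.pow_le_pow_right three_pos (by omega)
    rw [pow_add] at hpow
    obtain ⟨l, hl, hl', x, y, h⟩ := exists_isStraddlingPair (i := t + 6 * q) (z := z) (by omega)
    exact ⟨l, x, y, hl, hl', h⟩
  choose! l x y hlow hhigh hpair using hpair
  refine le_two_mul_cutTypes_of_isStraddlingPair hz hright hpair (fun q q' hlt hq' => ?_)
    (fun q hq => ?_) fun q hq => ?_
  · have := hhigh q (hlt.trans hq')
    have := hlow q' hq'
    omega
  · exact Nat.pow_le_pow_right three_pos (by have := hlow q hq; omega)
  · have hpow : 3 ^ (l q + 3) ≤ 3 ^ (t + 6 * n) :=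
      Nat.pow_le_pow_right three_pos (by have := hhigh q hq; omega)
    have : 0 < 3 ^ l q := by positivity
    rw [pow_add] at hpow
    omega

/-- A depth `k` at which `G_k` has clique-width larger than `r`. The endpoints together with the at
most `4r` switches of a cut form at most `4r + 2` landmarks, so one of `(4r + 2) ^ 2 + 1` windows of
`6 (2r + 1)` scales avoids all distances between landmarks; the remaining `4r + 4` scales leave room
for vertices far from all landmarks. -/
def depth (r : ℕ) : ℕ :=
  ((4 * r + 2) * (4 * r + 2) + 1) * (6 * (2 * r + 1)) + (4 * r + 2) + 2

theorem mul_two_mul_pow_le {m q L n : ℕ} (hq : q ≤ m * m) (hL : 1 ≤ L)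
    (hn : (m * m + 1) * L + m ≤ n) : m * (2 * 3 ^ (q * L)) ≤ 3 ^ n := by
  have hmul : q * L ≤ m * m * L := Nat.mul_le_mul_right _ hq
  rw [add_one_mul] at hn
  calc m * (2 * 3 ^ (q * L)) ≤ 3 ^ m * (3 * 3 ^ (q * L)) :=
        Nat.mul_le_mul (Nat.lt_pow_self (by norm_num)).le (Nat.mul_le_mul_right _ (by norm_num))
    _ = 3 ^ (m + (q * L + 1)) := by rw [pow_add, pow_succ']
    _ ≤ 3 ^ n := Nat.pow_le_pow_right three_pos (by omega)

theorem exists_landmarks {r : ℕ} {X : Set (Fin (3 ^ k))} (hX : cutTypes (Gk k) X ≤ r) :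
    ∃ M : Finset ℕ, M.card ≤ 4 * r + 2 ∧ 0 ∈ M ∧ 3 ^ k / 2 ∈ M ∧
      ∀ x < 3 ^ k / 2, ¬ (evenVertex k x ∈ X ↔ evenVertex k (x + 1) ∈ X) → x ∈ M := by
  classical
  let D := {x ∈ Finset.range (3 ^ k / 2) | ¬ (evenVertex k x ∈ X ↔ evenVertex k (x + 1) ∈ X)}
  have hD : D.card ≤ 4 * cutTypes (Gk k) X := by
    apply card_le_of_forall_even_split <;> simp only [D, Finset.mem_filter, Finset.mem_range]
    exacts [fun x hx => hx.1, fun x hx => hx.2]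
  refine ⟨insert 0 (insert (3 ^ k / 2) D), ?_, by simp, by simp, fun x hx hsplit => by simp [D, *]⟩
  have := Finset.card_insert_le 0 (insert (3 ^ k / 2) D)
  have := Finset.card_insert_le (3 ^ k / 2) D
  omega

theorem exists_farFrom_evenVertex {X : Set (Fin (3 ^ k))} {M : Finset ℕ} {S : ℕ}
    (h : M.card * (2 * S) < (evenVertices k ∩ X).ncard) :
    ∃ x ≤ 3 ^ k / 2, evenVertex k x ∈ X ∧ FarFrom M S x := by
  rw [ncard_evenVertices_inter] at h
  obtain ⟨x, ⟨hx, hxX⟩, hfar⟩ := exists_farFrom h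
  exact ⟨x, hx, hxX, hfar⟩

theorem lt_cutTypes {r : ℕ} (hk : depth r ≤ k) {X : Set (Fin (3 ^ k))}
    (hlow : 3 ^ (k - 2) < (evenVertices k ∩ X).ncard)
    (hhigh : (evenVertices k ∩ X).ncard ≤ 2 * 3 ^ (k - 2)) : r < cutTypes (Gk k) X := by
  by_contra! hX
  obtain ⟨M, hM, h0, hh, hsplit⟩ := exists_landmarks hX
  let s (q : ℕ) := 3 ^ (q * (6 * (2 * r + 1)))
  have hs : Monotone s := fun a b hab =>
    Nat.pow_le_pow_right three_pos (Nat.mul_le_mul_right _ hab)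
  obtain ⟨q, hq, hgap⟩ := exists_hasGap hs M
  have hroom : M.card * (2 * s q) ≤ 3 ^ (k - 2) :=
    (Nat.mul_le_mul_right _ hM).trans
      (mul_two_mul_pow_le (hq.trans (Nat.mul_le_mul hM hM)) (by omega) (Nat.le_sub_of_add_le hk))
  have hcompl : 3 ^ (k - 2) < (evenVertices k ∩ Xᶜ).ncard := by
    have hsum := Set.ncard_inter_add_ncard_sdiff_eq_ncard (evenVertices k) X
    have := three_mul_lt_ncard_evenVertices (le_add_self.trans hk)
    rw [Set.sdiff_eq] at hsum
    omega
  obtain ⟨x, hx, hxX, hxfar⟩ := exists_farFrom_evenVertex (hroom.trans_lt hlow)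
  obtain ⟨y, hy, hyX, hyfar⟩ := exists_farFrom_evenVertex (hroom.trans_lt hcompl)
  have hsucc : s (q + 1) = 3 ^ (q * (6 * (2 * r + 1)) + 6 * (2 * r + 1)) := by
    simp only [s, add_one_mul]
  have hscale : 3 * s q ≤ s (q + 1) := by
    rw [hsucc, ← pow_succ']
    exact Nat.pow_le_pow_right three_pos (by omega)
  obtain ⟨z, hleft, hright, hz⟩ := exists_isSwitch (Nat.one_le_pow _ _ three_pos) hscale hgap h0 hh
    hsplit hx hy hxfar hyfar (fun h => hyX (h.1 hxX))
  rw [hsucc] at hleft hright hz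
  have := le_two_mul_cutTypes_of_isSwitch hz hleft hright
  omega

theorem lt_cliqueWidth {r : ℕ} (hk : depth r ≤ k) : r < cliqueWidth (Gk k) := by
  obtain ⟨e, he⟩ := CW.exists_builds_cliqueWidth (Gk k)
  have hlarge : 3 ^ (k - 2) < (evenVertices k).ncard := by
    have := three_mul_lt_ncard_evenVertices (le_add_self.trans hk)
    omega
  obtain ⟨X, hX, hlow, hhigh⟩ := he.exists_balanced_cut (Nat.one_le_pow _ _ three_pos) hlarge
  exact (lt_cutTypes hk hlow hhigh).trans_le hX

end Gk

/-- The graphs `G_k` have unbounded clique-width: for every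
natural number `r` there exists `k ≥ 1` such that the clique-width of `G_k` is
strictly greater than `r`. -/
theorem stmt_11 (r : ℕ) : ∃ k : ℕ, 1 ≤ k ∧ r < cliqueWidth (Gk k) :=
  ⟨Gk.depth r, Nat.le_add_left 1 _, Gk.lt_cliqueWidth le_rfl⟩
end

section
/- Every small hereditary class of ordered graphs has bounded twin-width: if C is a class of finite ordered graphs that is closed under taking induced ordered subgraphs, and there exist constants c > 0 and K > 0 such that for every n the number of isomorphism classes of n-vertex ordered graphs in C is at most K·c^n, then there exists a natural number d such that every graph in C has twin-width at most d. -/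
/-- `P` is a partition of the type `V`: its parts are nonempty and every element of
`V` lies in exactly one part. -/
def IsPartitionOf {V : Type*} (P : Set (Set V)) : Prop :=
  (∀ p ∈ P, p.Nonempty) ∧ ∀ v : V, ∃! p, p ∈ P ∧ v ∈ p

/-- Two distinct parts `X` and `Y` are joined by a red edge when some but not all
pairs `(x, y)` with `x ∈ X` and `y ∈ Y` are adjacent in `G`. -/
def RedAdj {V : Type*} (G : SimpleGraph V) (X Y : Set V) : Prop :=
  X ≠ Y ∧ (∃ x ∈ X, ∃ y ∈ Y, G.Adj x y) ∧ (∃ x ∈ X, ∃ y ∈ Y, ¬ G.Adj x y)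

/-- In the partition `P`, every part is joined by red edges to at most `d` other
parts. -/
def RedDegLE {V : Type*} (G : SimpleGraph V) (P : Set (Set V)) (d : ℕ) : Prop :=
  ∀ X ∈ P, {Y | Y ∈ P ∧ RedAdj G X Y}.ncard ≤ d

/-- `G` has twin-width at most `d`: there is a contraction sequence
`P_n, P_(n−1), …, P_1` (where `n` is the number of vertices of `G`), i.e. a sequence
of partitions of the vertex set where `P_n` is the partition into singletons, `P_1`
has a single part, and each `P_i` is obtained from `P_(i+1)` by merging two of its
parts, in which every part of every partition of the sequence is joined by red
edges to at most `d` other parts. -/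
def HasTwinWidthLE {V : Type*} [Fintype V] (G : SimpleGraph V) (d : ℕ) : Prop :=
  ∃ P : ℕ → Set (Set V),
    (P (Fintype.card V) = {s : Set V | ∃ v : V, s = {v}}) ∧
    (0 < Fintype.card V → P 1 = {Set.univ}) ∧
    (∀ i : ℕ, 1 ≤ i → i < Fintype.card V →
      ∃ X Y : Set V, X ∈ P (i + 1) ∧ Y ∈ P (i + 1) ∧ X ≠ Y ∧
        P i = (P (i + 1) \ {X, Y}) ∪ {X ∪ Y}) ∧
    (∀ i : ℕ, 1 ≤ i → i ≤ Fintype.card V →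
      IsPartitionOf (P i) ∧ RedDegLE G (P i) d)

/-!
Colour the vertices of an ordered graph with four colours, and count the coloured ordered graphs
(*patterns*) induced on small sets of coloured vertices. In a small hereditary class their number
grows at most exponentially.

Divide the order into intervals. If a set `T` with no more vertices than there are parts had many
traces from many of the parts, or if many parts had splitting vertices (with respect to `T`) in many
other parts, then too many choices of witnesses could be recovered from their patterns. With `T`
chosen so that no vertex splits many parts, this forces every division to have a poor part: one
whose vertices leave boundedly many traces outside boundedly many parts.

Poor parts drive the contraction. Start from the division into singletons and repeatedly merge two
consecutive parts inside a poor group of the division into pairs, which keeps all parts poor.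
Identify two vertices of a part when they agree on all the parts that are *tame* towards it: those
for which one of the two parts leaves few traces on the other. This gives boundedly many classes per
part, and red edges only towards the boundedly many exceptional parts; each merge of parts refines
into contractions of the classes.
-/

namespace TwinWidth

section Contraction

variable {V : Type*} {r s t : Setoid V} {x y : V} {G : SimpleGraph V} {d : ℕ}

theorem setOf_rel_eq_iff : {u | r u x} = {u | r u y} ↔ r x y :=
  ⟨fun h => h.subset (r.refl x), fun h => Set.ext fun _ =>
    ⟨fun hu => r.trans hu h, fun hu => r.trans hu (r.symm h)⟩⟩

/-- The equivalence relation obtained from `r` by merging the classes of `x` and `y`. -/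
def glue (r : Setoid V) (x y : V) : Setoid V where
  r u v := r u v ∨ (r u x ∨ r u y) ∧ (r v x ∨ r v y)
  iseqv :=
    { refl := fun u => .inl (r.refl u)
      symm := fun h => h.imp r.symm And.symm
      trans := by
        rintro u v w (huv | ⟨hu, hv⟩) (hvw | ⟨hv', hw⟩)
        · exact .inl (r.trans huv hvw)
        · exact .inr ⟨hv'.imp (r.trans huv) (r.trans huv), hw⟩
        · exact .inr ⟨hu, hv.imp (r.trans (r.symm hvw)) (r.trans (r.symm hvw))⟩
        · exact .inr ⟨hu, hw⟩ }

theorem glue_apply {u v : V} :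
    glue r x y u v ↔ r u v ∨ (r u x ∨ r u y) ∧ (r v x ∨ r v y) := Iff.rfl

theorem lt_glue (hxy : ¬ r x y) : r < glue r x y :=
  lt_of_le_of_ne (fun _ _ => .inl) fun h =>
    hxy (h ▸ glue_apply.2 (.inr ⟨.inl (r.refl x), .inr (r.refl y)⟩))

theorem glue_le (hrs : r ≤ s) (hxy : s x y) : glue r x y ≤ s := by
  have to_x : ∀ {u}, r u x ∨ r u y → s u x := fun h =>
    h.elim (hrs ·) fun h => s.trans (hrs h) (s.symm hxy)
  rintro u v (huv | ⟨hu, hv⟩)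
  · exact hrs huv
  · exact s.trans (to_x hu) (s.symm (to_x hv))

theorem classes_glue :
    (glue r x y).classes =
      (r.classes \ {{u | r u x}, {u | r u y}}) ∪ {{u | r u x} ∪ {u | r u y}} := by
  have class_merged : ∀ w, r w x ∨ r w y →
      {u | glue r x y u w} = {u | r u x} ∪ {u | r u y} := by
    intro w hw
    ext u
    refine ⟨?_, fun hu => .inr ⟨hu, hw⟩⟩
    rintro (huw | ⟨hu, -⟩)
    exacts [hw.imp (r.trans huw) (r.trans huw), hu]
  have class_kept : ∀ w, ¬ (r w x ∨ r w y) → {u | glue r x y u w} = {u | r u w} := by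
    intro w hw
    ext u
    exact ⟨fun hu => hu.resolve_right fun h => hw h.2, .inl⟩
  ext c
  constructor
  · rintro ⟨w, rfl⟩
    by_cases hw : r w x ∨ r w y
    · exact .inr (class_merged w hw)
    · rw [class_kept w hw]
      refine .inl ⟨r.mem_classes w, ?_⟩
      simpa only [Set.mem_insert_iff, Set.mem_singleton_iff, setOf_rel_eq_iff] using hw
  · rintro (⟨⟨w, rfl⟩, hw⟩ | rfl)
    · simp only [Set.mem_insert_iff, Set.mem_singleton_iff, setOf_rel_eq_iff] at hw
      exact ⟨w, (class_kept w hw).symm⟩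
    · exact ⟨x, (class_merged x (.inl (r.refl x))).symm⟩

theorem exists_classes_eq_of_covBy (h : r ⋖ s) : ∃ X ∈ r.classes, ∃ Y ∈ r.classes,
    X ≠ Y ∧ s.classes = (r.classes \ {X, Y}) ∪ {X ∪ Y} := by
  obtain ⟨x, y, hs, hr⟩ : ∃ x y, s x y ∧ ¬ r x y := by
    by_contra! hle
    exact h.lt.not_ge fun x y => hle x y
  obtain rfl : glue r x y = s := (glue_le h.le hs).eq_of_not_lt (h.2 (lt_glue hr))
  exact ⟨_, r.mem_classes x, _, r.mem_classes y, fun hXY => hr (setOf_rel_eq_iff.1 hXY),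
    classes_glue⟩

theorem ncard_classes_of_covBy [Finite V] (h : r ⋖ s) :
    s.classes.ncard + 1 = r.classes.ncard := by
  obtain ⟨X, hX, Y, hY, hne, hs⟩ := exists_classes_eq_of_covBy h
  have hunion : X ∪ Y ∉ r.classes \ {X, Y} := by
    rintro ⟨hXY, hnot⟩
    obtain ⟨v, hv⟩ := Setoid.nonempty_of_mem_partition r.isPartition_classes hX
    refine hnot (.inl ?_)
    exact Setoid.eq_of_mem_classes hXY (.inl hv) hX hv
  have hpair : ({X, Y} : Set (Set V)) ⊆ r.classes := Set.pair_subset hX hY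
  have hdiff := Set.ncard_sdiff_add_ncard_of_subset hpair
  rw [Set.ncard_pair hne] at hdiff
  rw [hs, Set.union_singleton, Set.ncard_insert_of_notMem hunion]
  exact hdiff

theorem isPartitionOf_classes (r : Setoid V) : IsPartitionOf r.classes :=
  ⟨fun _ hp => Setoid.nonempty_of_mem_partition r.isPartition_classes hp, fun v => by
    simpa only [and_assoc, and_imp] using r.isPartition_classes.2 v⟩

theorem classes_bot : (⊥ : Setoid V).classes = {s | ∃ v, s = {v}} := rfl

theorem classes_top [Nonempty V] : (⊤ : Setoid V).classes = {Set.univ} := by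
  simp [Setoid.classes, Set.ext_iff, eq_comm (b := Set.univ)]

theorem ncard_classes_le [Fintype V] (r : Setoid V) : r.classes.ncard ≤ Fintype.card V := by
  have hrange : r.classes = (fun y => {x | r x y}) '' Set.univ := by
    simp only [Setoid.classes, Set.image_univ, Set.range, eq_comm]
  rw [hrange, ← Nat.card_eq_fintype_card, ← Set.ncard_univ]
  exact Set.ncard_image_le

theorem ncard_classes_bot [Fintype V] : (⊥ : Setoid V).classes.ncard = Fintype.card V := by
  have hrange : (⊥ : Setoid V).classes = singleton '' Set.univ := by
    simp only [classes_bot, Set.image_univ, Set.range, eq_comm]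
  rw [hrange, Set.ncard_image_of_injective _ Set.singleton_injective, Set.ncard_univ,
    Nat.card_eq_fintype_card]

theorem redDegLE_classes_bot (G : SimpleGraph V) (d : ℕ) :
    RedDegLE G (⊥ : Setoid V).classes d := by
  have not_redAdj (x y : V) : ¬ RedAdj G {x} {y} := by
    rintro ⟨-, ⟨_, rfl, _, rfl, hadj⟩, _, rfl, _, rfl, hnot⟩
    exact hnot hadj
  rw [classes_bot]
  rintro _ ⟨x, rfl⟩
  have hempty : {Y | Y ∈ {s | ∃ v, s = {v}} ∧ RedAdj G {x} Y} = ∅ := by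
    rw [Set.eq_empty_iff_forall_notMem]
    rintro _ ⟨⟨y, rfl⟩, hred⟩
    exact not_redAdj x y hred
  rw [hempty, Set.ncard_empty]
  exact d.zero_le

/-- `r` can be coarsened to `s` by merging two classes at a time, so that every partition
reached on the way (hence `s`, but not necessarily `r`) has red degree at most `d`. -/
def ContractsTo (G : SimpleGraph V) (d : ℕ) : Setoid V → Setoid V → Prop :=
  Relation.ReflTransGen fun r s => r ⋖ s ∧ RedDegLE G s.classes d

theorem contractsTo_of_le [Finite V] (hrs : r ≤ s)
    (h : ∀ t, r ≤ t → t ≤ s → RedDegLE G t.classes d) : ContractsTo G d r s := by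
  have : Finite (Setoid V) :=
    .of_injective Setoid.classes fun _ _ => Setoid.classes_inj.2
  induction r using WellFoundedGT.induction with
  | ind r ih =>
    obtain rfl | hlt := hrs.eq_or_lt
    · exact .refl
    · obtain ⟨t, hrt, hts⟩ := exists_covBy_le_of_lt hlt
      exact .head ⟨hrt, h t hrt.le hts⟩ (ih t hrt.lt hts fun u htu => h u (hrt.le.trans htu))

theorem exists_seq_of_contractsTo [Fintype V] (h : ContractsTo G d ⊥ r) :
    ∃ P : ℕ → Setoid V, P (Fintype.card V) = ⊥ ∧ P r.classes.ncard = r ∧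
      ∀ i, r.classes.ncard ≤ i → i < Fintype.card V →
        P (i + 1) ⋖ P i ∧ RedDegLE G (P i).classes d := by
  induction h with
  | refl =>
    rw [ncard_classes_bot]
    exact ⟨fun _ => ⊥, rfl, rfl, fun i hi hi' => absurd hi' hi.not_gt⟩
  | @tail r s _ hrs ih =>
    obtain ⟨P, hbot, htop, hP⟩ := ih
    have hcard := ncard_classes_of_covBy hrs.1
    have hle := ncard_classes_le r
    refine ⟨Function.update P s.classes.ncard s, ?_, Function.update_self .., ?_⟩
    · rw [Function.update_of_ne (by omega), hbot]
    · intro i hi hi'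
      rw [Function.update_of_ne (by omega : i + 1 ≠ s.classes.ncard)]
      obtain rfl | hlt := hi.eq_or_lt
      · rw [Function.update_self, hcard, htop]
        exact hrs
      · rw [Function.update_of_ne hlt.ne']
        exact hP i (by omega) hi'

theorem hasTwinWidthLE_of_contractsTo [Fintype V] (h : ContractsTo G d ⊥ ⊤) :
    HasTwinWidthLE G d := by
  obtain ⟨P, hbot, htop, hP⟩ := exists_seq_of_contractsTo h
  have ncard_top_le {i : ℕ} (hi : 1 ≤ i) : (⊤ : Setoid V).classes.ncard ≤ i := by
    refine le_trans ?_ hi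
    obtain hV | hV := isEmpty_or_nonempty V
    · exact (ncard_classes_le _).trans (Fintype.card_eq_zero (α := V) ▸ zero_le_one)
    · rw [classes_top, Set.ncard_singleton]
  refine ⟨fun i => (P i).classes, ?_, ?_, ?_, ?_⟩
  · exact (congrArg Setoid.classes hbot).trans classes_bot
  · intro hV
    have : Nonempty V := Fintype.card_pos_iff.1 hV
    rw [classes_top, Set.ncard_singleton] at htop
    exact (congrArg Setoid.classes htop).trans classes_top
  · intro i hi hi'
    obtain ⟨X, hX, Y, hY, h⟩ := exists_classes_eq_of_covBy (hP i (ncard_top_le hi) hi').1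
    exact ⟨X, Y, hX, hY, h⟩
  · intro i hi hi'
    refine ⟨isPartitionOf_classes _, ?_⟩
    obtain rfl | hlt := hi'.eq_or_lt
    · simpa only [hbot] using redDegLE_classes_bot G d
    · exact (hP i (ncard_top_le hi) hlt).2

end Contraction

section Trace

variable {V ι : Type*} {G : SimpleGraph V} {P P' Q Q' : Set V} {x y : V}

theorem ncard_image_le_ncard_image {α β γ : Type*} {s : Set α} {f : α → β} {g : α → γ}
    (h : ∀ x ∈ s, ∀ y ∈ s, g x = g y → f x = f y) (hs : s.Finite) :
    (f '' s).ncard ≤ (g '' s).ncard := by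
  obtain rfl | ⟨x₀, -⟩ := s.eq_empty_or_nonempty
  · simp
  have : Nonempty α := ⟨x₀⟩
  have factors : f '' s = (f ∘ Function.invFunOn g s) '' (g '' s) := by
    rw [Set.image_image]
    refine Set.image_congr fun x hx => h x hx _ ?_ ?_
    · exact Function.invFunOn_mem ⟨x, hx, rfl⟩
    · exact (Function.invFunOn_eq ⟨x, hx, rfl⟩).symm
  rw [factors]
  exact Set.ncard_image_le (hs.image g)

/-- The trace of the vertex `x` on the set `Q`: the neighbours of `x` in `Q`. -/
def trace (G : SimpleGraph V) (Q : Set V) (x : V) : Set V :=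
  {v ∈ Q | G.Adj x v}

/-- The number of distinct traces on `Q` of the vertices of `P`. -/
noncomputable def traceCount (G : SimpleGraph V) (P Q : Set V) : ℕ :=
  (trace G Q '' P).ncard

theorem trace_eq_trace_iff : trace G Q x = trace G Q y ↔ ∀ v ∈ Q, G.Adj x v ↔ G.Adj y v := by
  simp only [trace, Set.ext_iff, Set.mem_ofPred_eq, and_congr_right_iff]

theorem trace_eq_trace_of_subset (hQ : Q ⊆ Q') (h : trace G Q' x = trace G Q' y) :
    trace G Q x = trace G Q y :=
  trace_eq_trace_iff.2 fun v hv => trace_eq_trace_iff.1 h v (hQ hv)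

theorem trace_union_eq_trace_union_iff : trace G (Q ∪ Q') x = trace G (Q ∪ Q') y ↔
    trace G Q x = trace G Q y ∧ trace G Q' x = trace G Q' y := by
  simp only [trace_eq_trace_iff, Set.mem_union, or_imp, forall_and]

variable [Finite V]

theorem traceCount_mono (hP : P ⊆ P') (hQ : Q ⊆ Q') : traceCount G P Q ≤ traceCount G P' Q' :=
  (ncard_image_le_ncard_image (fun _ _ _ _ => trace_eq_trace_of_subset hQ) P.toFinite).trans
    (Set.ncard_le_ncard (Set.image_mono hP))

theorem traceCount_le_one (hP : P.Subsingleton) : traceCount G P Q ≤ 1 :=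
  Set.ncard_le_one_iff_subsingleton.2 (hP.image _)

theorem traceCount_union_le : traceCount G P (Q ∪ Q') ≤ traceCount G P Q * traceCount G P Q' := by
  have hpair : traceCount G P (Q ∪ Q') ≤ ((fun x => (trace G Q x, trace G Q' x)) '' P).ncard :=
    ncard_image_le_ncard_image
      (fun x _ y _ h => trace_union_eq_trace_union_iff.2 (Prod.mk.inj h)) P.toFinite
  rw [traceCount, traceCount, traceCount, ← Set.ncard_prod]
  refine hpair.trans (Set.ncard_le_ncard ?_)
  rintro _ ⟨x, hx, rfl⟩
  exact ⟨⟨x, hx, rfl⟩, ⟨x, hx, rfl⟩⟩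

theorem traceCount_le_two_pow : traceCount G P Q ≤ 2 ^ traceCount G Q P := by
  rw [traceCount, traceCount, ← Set.ncard_powerset]
  refine (ncard_image_le_ncard_image (g := fun x => {t ∈ trace G P '' Q | x ∈ t}) ?_
    P.toFinite).trans (Set.ncard_le_ncard ?_)
  · intro x hx y hy hxy
    refine trace_eq_trace_iff.2 fun v hv => ?_
    have hmem : x ∈ trace G P v ↔ y ∈ trace G P v := by
      simpa only [Set.mem_sep_iff, Set.mem_image_of_mem _ hv, true_and] using
        Set.ext_iff.1 hxy (trace G P v)
    simpa only [trace, Set.mem_ofPred_eq, hx, hy, true_and, G.adj_comm v] using hmem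
  · rintro _ ⟨x, -, rfl⟩
    exact Set.sep_subset _ _

theorem traceCount_biUnion_le (I : Finset ι) (Q : ι → Set V) :
    traceCount G P (⋃ i ∈ I, Q i) ≤ ∏ i ∈ I, traceCount G P (Q i) := by
  classical
  induction I using Finset.induction_on with
  | empty =>
    refine traceCount_le_two_pow.trans ?_
    simp [traceCount]
  | insert i I hi ih =>
    rw [Finset.set_biUnion_insert, Finset.prod_insert hi]
    exact traceCount_union_le.trans (Nat.mul_le_mul_left _ ih)

end Trace

section Division

variable {V ι κ κ' : Type*} {G : SimpleGraph V} {f : V → κ} {k l : κ} {s b m : ℕ}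
  {r t : Setoid V} {P P' : Set V}

/-- The classes of `r` that meet the set `P`. -/
def classesMeeting (r : Setoid V) (P : Set V) : Set (Set V) :=
  (fun v => {u | r u v}) '' P

theorem ncard_classesMeeting_mono [Finite V] (hr : r ≤ t) (hP : P ⊆ P') :
    (classesMeeting t P).ncard ≤ (classesMeeting r P').ncard := by
  refine (ncard_image_le_ncard_image (fun x _ y _ h => ?_) P.toFinite).trans
    (Set.ncard_le_ncard (Set.image_mono hP))
  exact setOf_rel_eq_iff.2 (hr (setOf_rel_eq_iff.1 h))

theorem ncard_classesMeeting_union_le :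
    (classesMeeting r (P ∪ P')).ncard ≤
      (classesMeeting r P).ncard + (classesMeeting r P').ncard := by
  rw [classesMeeting, Set.image_union]
  exact Set.ncard_union_le _ _

theorem classes_eq_classesMeeting_univ : r.classes = classesMeeting r Set.univ := by
  simp only [Setoid.classes, classesMeeting, Set.image_univ, Set.range, eq_comm]

/-- The part `k` of the division of the vertex set into the fibres of `f` is *poor* (not *rich*):
up to discarding at most `s` parts, its vertices leave at most `b` traces on the rest of the
graph. -/
def Poor (G : SimpleGraph V) (f : V → κ) (k : κ) (s b : ℕ) : Prop :=
  ∃ Y : Finset κ, Y.card ≤ s ∧ traceCount G (f ⁻¹' {k}) (f ⁻¹' (Y : Set κ)ᶜ) ≤ b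

/-- The parts `k` and `l` of the division `f` see few traces of each other. -/
def Tame (G : SimpleGraph V) (f : V → κ) (b : ℕ) (k l : κ) : Prop :=
  traceCount G (f ⁻¹' {k}) (f ⁻¹' {l}) ≤ b ∨ traceCount G (f ⁻¹' {l}) (f ⁻¹' {k}) ≤ b

/-- The union of the parts of the division `f` that are tame towards the part `k`. -/
def tameRegion (G : SimpleGraph V) (f : V → κ) (b : ℕ) (k : κ) : Set V :=
  {v | Tame G f b k (f v)}

/-- Two vertices are near twins when they lie in the same part of the division `f` and have the
same neighbours in every part that is tame towards it. -/
def nearTwins (G : SimpleGraph V) (f : V → κ) (b : ℕ) : Setoid V :=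
  Setoid.ker fun x => (f x, trace G (tameRegion G f b (f x)) x)

theorem nearTwins_apply {x y : V} : nearTwins G f b x y ↔
    f x = f y ∧ ∀ v, Tame G f b (f x) (f v) → (G.Adj x v ↔ G.Adj y v) := by
  rw [nearTwins, Setoid.ker_def, Prod.mk.injEq]
  refine and_congr_right fun hxy => ?_
  rw [← hxy, trace_eq_trace_iff]
  rfl

theorem Tame.symm (h : Tame G f b k l) : Tame G f b l k :=
  Or.symm h

theorem adj_iff_adj_of_nearTwins {x x' y y' : V} (hx : nearTwins G f b x x')
    (hy : nearTwins G f b y y') (h : Tame G f b (f x) (f y)) : G.Adj x y ↔ G.Adj x' y' := by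
  rw [nearTwins_apply] at hx hy
  rw [hx.2 y h, G.adj_comm x', hy.2 x' (hx.1 ▸ h.symm), G.adj_comm]

theorem nearTwins_eq_bot_of_injective (hf : f.Injective) : nearTwins G f b = ⊥ :=
  eq_bot_iff.2 fun _ _ h => hf (nearTwins_apply.1 h).1

variable [Finite V]

theorem Tame.of_comp {f : V → ι} {p : ι → κ} {i j : ι} (h : Tame G (p ∘ f) b (p i) (p j)) :
    Tame G f b i j := by
  have fibre_subset (i : ι) : f ⁻¹' {i} ⊆ (p ∘ f) ⁻¹' {p i} := by
    rintro v rfl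
    rfl
  exact h.imp (traceCount_mono (fibre_subset i) (fibre_subset j)).trans
    (traceCount_mono (fibre_subset j) (fibre_subset i)).trans

theorem nearTwins_le_nearTwins_comp (f : V → ι) (p : ι → κ) :
    nearTwins G f b ≤ nearTwins G (p ∘ f) b := by
  intro x y hxy
  rw [nearTwins_apply] at hxy ⊢
  exact ⟨congrArg p hxy.1, fun v hv => hxy.2 v hv.of_comp⟩

theorem poor_of_injective (hf : f.Injective) (hb : 1 ≤ b) : Poor G f k s b :=
  ⟨∅, s.zero_le, (traceCount_le_one (Set.subsingleton_singleton.preimage hf)).trans hb⟩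

theorem tame_of_notMem {Y : Finset κ}
    (hY : traceCount G (f ⁻¹' {k}) (f ⁻¹' (Y : Set κ)ᶜ) ≤ b) (hl : l ∉ Y) : Tame G f b k l := by
  refine .inl ((traceCount_mono subset_rfl (Set.preimage_mono ?_)).trans hY)
  rwa [Set.singleton_subset_iff]

theorem traceCount_inter_tameRegion_le :
    traceCount G (f ⁻¹' {k}) (f ⁻¹' {l} ∩ tameRegion G f b k) ≤ 2 ^ b := by
  by_cases h : Tame G f b k l
  · refine (traceCount_mono subset_rfl Set.inter_subset_left).trans ?_
    obtain h | h := h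
    · exact h.trans Nat.lt_two_pow_self.le
    · exact traceCount_le_two_pow.trans (Nat.pow_le_pow_right two_pos h)
  · have hempty : f ⁻¹' {l} ∩ tameRegion G f b k = ∅ := by
      rw [Set.eq_empty_iff_forall_notMem]
      rintro v ⟨rfl, hv⟩
      exact h hv
    rw [hempty]
    exact traceCount_le_two_pow.trans (Nat.pow_le_pow_right two_pos (by simp [traceCount]))

theorem traceCount_tameRegion_le (h : Poor G f k s b) :
    traceCount G (f ⁻¹' {k}) (tameRegion G f b k) ≤ b * (2 ^ b) ^ s := by
  obtain ⟨Y, hYs, hYb⟩ := h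
  have hcover : tameRegion G f b k ⊆
      f ⁻¹' (Y : Set κ)ᶜ ∪ ⋃ l ∈ Y, f ⁻¹' {l} ∩ tameRegion G f b k := by
    intro v hv
    by_cases hvY : f v ∈ Y
    · exact .inr (Set.mem_biUnion hvY ⟨rfl, hv⟩)
    · exact .inl hvY
  calc traceCount G (f ⁻¹' {k}) (tameRegion G f b k)
      ≤ traceCount G (f ⁻¹' {k}) (f ⁻¹' (Y : Set κ)ᶜ) *
          ∏ l ∈ Y, traceCount G (f ⁻¹' {k}) (f ⁻¹' {l} ∩ tameRegion G f b k) :=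
        (traceCount_mono subset_rfl hcover).trans
          (traceCount_union_le.trans (Nat.mul_le_mul_left _ (traceCount_biUnion_le _ _)))
    _ ≤ b * (2 ^ b) ^ Y.card :=
        Nat.mul_le_mul hYb (Finset.prod_le_pow_card _ _ _ fun _ _ =>
          traceCount_inter_tameRegion_le)
    _ ≤ b * (2 ^ b) ^ s :=
        Nat.mul_le_mul_left _ (Nat.pow_le_pow_right (by positivity) hYs)

theorem ncard_classesMeeting_nearTwins_le (h : Poor G f k s b) :
    (classesMeeting (nearTwins G f b) (f ⁻¹' {k})).ncard ≤ b * (2 ^ b) ^ s := by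
  refine le_trans ?_ (traceCount_tameRegion_le h)
  refine ncard_image_le_ncard_image (fun x hx y hy hxy => ?_) (Set.toFinite _)
  obtain rfl : f x = k := hx
  rw [setOf_rel_eq_iff, nearTwins_apply]
  exact ⟨Eq.symm hy, trace_eq_trace_iff.1 hxy⟩

theorem redDegLE_of_le_nearTwins (hpoor : ∀ k, Poor G f k s b) (ht : t ≤ nearTwins G f b)
    (hm : ∀ k, (classesMeeting t (f ⁻¹' {k})).ncard ≤ m) : RedDegLE G t.classes (s * m) := by
  rintro _ ⟨x, rfl⟩
  obtain ⟨Y, hYs, hYb⟩ := hpoor (f x)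
  have hred : {Z | Z ∈ t.classes ∧ RedAdj G {u | t u x} Z} ⊆
      ⋃ l ∈ Y, classesMeeting t (f ⁻¹' {l}) := by
    rintro _ ⟨⟨z, rfl⟩, -, ⟨u, hu, v, hv, hadj⟩, u', hu', v', hv', hnot⟩
    refine Set.mem_biUnion (x := f z) ?_ ⟨z, rfl, rfl⟩
    by_contra hz
    have hhom : ∀ {u v}, t u x → t v z → (G.Adj u v ↔ G.Adj x z) := fun hu hv =>
      (adj_iff_adj_of_nearTwins (ht (t.symm hu)) (ht (t.symm hv)) (tame_of_notMem hYb hz)).symm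
    exact hnot ((hhom hu' hv').2 ((hhom hu hv).1 hadj))
  calc {Z | Z ∈ t.classes ∧ RedAdj G {u | t u x} Z}.ncard
      ≤ (⋃ l ∈ Y, classesMeeting t (f ⁻¹' {l})).ncard := Set.ncard_le_ncard hred
    _ ≤ ∑ l ∈ Y, (classesMeeting t (f ⁻¹' {l})).ncard := Finset.set_ncard_biUnion_le _ _
    _ ≤ Y.card * m := Finset.sum_le_card_nsmul _ _ _ fun l _ => hm l
    _ ≤ s * m := Nat.mul_le_mul_right _ hYs

theorem Poor.comp_of_comp [Finite κ'] {f : V → ι} {p : ι → κ} {q : ι → κ'} {l : κ} {j : κ'} {c : ℕ}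
    (h : Poor G (p ∘ f) l s b) (hj : q ⁻¹' {j} ⊆ p ⁻¹' {l})
    (hc : ∀ y, (q '' (p ⁻¹' {y})).ncard ≤ c) : Poor G (q ∘ f) j (c * s) b := by
  classical
  obtain ⟨Y, hYs, hYb⟩ := h
  have hfin : (⋃ y ∈ Y, q '' (p ⁻¹' {y})).Finite := Set.toFinite _
  refine ⟨hfin.toFinset, ?_, le_trans (traceCount_mono (fun v hv => hj hv) ?_) hYb⟩
  · rw [← Set.ncard_eq_toFinset_card _ hfin]
    calc (⋃ y ∈ Y, q '' (p ⁻¹' {y})).ncard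
        ≤ ∑ y ∈ Y, (q '' (p ⁻¹' {y})).ncard := Finset.set_ncard_biUnion_le _ _
      _ ≤ Y.card * c := Finset.sum_le_card_nsmul _ _ _ fun y _ => hc y
      _ ≤ c * s := by rw [mul_comm]; exact Nat.mul_le_mul_left _ hYs
  · rw [hfin.coe_toFinset]
    exact fun v hv hvY => hv (Set.mem_biUnion hvY ⟨f v, rfl, rfl⟩)

end Division

section Merging

variable {V : Type*} {G : SimpleGraph V} {s b N : ℕ}

theorem eq_castSucc_or_eq_succ_of_predAbove_eq {k j : Fin (N + 1)} {i : Fin (N + 2)}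
    (h : k.predAbove i = j) : i = j.castSucc ∨ i = j.succ := by
  rw [Fin.predAbove] at h
  split_ifs at h
  · exact .inr (by rw [← h, Fin.succ_pred])
  · exact .inl (by rw [← h, Fin.castSucc_castPred])

theorem eq_of_predAbove_eq_of_ne {k j : Fin (N + 1)} {i i' : Fin (N + 2)} (hj : j ≠ k)
    (h : k.predAbove i = j) (h' : k.predAbove i' = j) : i = i' := by
  have eq_succAbove {i : Fin (N + 2)} (h : k.predAbove i = j) : i = k.castSucc.succAbove j := by
    rw [← h, Fin.succAbove_predAbove]
    rintro rfl
    exact hj (by rw [← h, Fin.predAbove_castSucc_self])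
  rw [eq_succAbove h, eq_succAbove h']

/-- Group the parts `0, …, N + 1` of a division into consecutive pairs, the last group having
three elements when `N` is odd. -/
def pairUp (N : ℕ) (i : Fin (N + 2)) : Fin (N / 2 + 1) :=
  ⟨min (i / 2) (N / 2), by omega⟩

theorem monotone_pairUp : Monotone (pairUp N) := fun i j hij => by
  have : (i : ℕ) ≤ j := hij
  simp only [pairUp, Fin.mk_le_mk]
  omega

theorem surjective_pairUp : (pairUp N).Surjective := fun l =>
  ⟨⟨2 * l, by omega⟩, by ext; simp only [pairUp]; omega⟩

theorem ncard_preimage_pairUp_le (l : Fin (N / 2 + 1)) : (pairUp N ⁻¹' {l}).ncard ≤ 3 := by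
  have himage : Fin.val '' (pairUp N ⁻¹' {l}) ⊆ Finset.Icc (2 * l : ℕ) (2 * l + 2) := by
    rintro _ ⟨i, rfl, rfl⟩
    simp only [pairUp, Finset.coe_Icc, Set.mem_Icc]
    omega
  rw [← Set.ncard_image_of_injective _ Fin.val_injective]
  refine (Set.ncard_le_ncard himage).trans ?_
  rw [Set.ncard_coe_finset, Nat.card_Icc]
  omega

theorem preimage_predAbove_subset_preimage_pairUp (l : Fin (N / 2 + 1)) {k : Fin (N + 1)}
    (hk : (k : ℕ) = 2 * l) : k.predAbove ⁻¹' {k} ⊆ pairUp N ⁻¹' {l} := by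
  intro i hi
  ext
  obtain rfl | rfl := eq_castSucc_or_eq_succ_of_predAbove_eq hi <;>
    simp only [pairUp, Fin.val_castSucc, Fin.val_succ] <;> omega

theorem ncard_classesMeeting_predAbove_le [Finite V] {r : Setoid V} {m : ℕ} {f : V → Fin (N + 2)}
    (hm : ∀ i, (classesMeeting r (f ⁻¹' {i})).ncard ≤ m) (k j : Fin (N + 1)) :
    (classesMeeting r (k.predAbove ∘ f ⁻¹' {j})).ncard ≤ 2 * m := by
  have hsubset : k.predAbove ∘ f ⁻¹' {j} ⊆ f ⁻¹' {j.castSucc} ∪ f ⁻¹' {j.succ} :=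
    fun v hv => eq_castSucc_or_eq_succ_of_predAbove_eq hv
  rw [two_mul]
  exact (ncard_classesMeeting_mono le_rfl hsubset).trans
    (ncard_classesMeeting_union_le.trans (Nat.add_le_add (hm _) (hm _)))

variable [LinearOrder V]

/-- Every division of the ordered graph `G` into consecutive intervals has a poor part, that is,
no division is rich. A division into `N + 1` intervals is a monotone surjection onto
`Fin (N + 1)`. -/
def NoRichDivision (G : SimpleGraph V) (s b : ℕ) : Prop :=
  ∀ (N : ℕ) (f : V → Fin (N + 1)), Monotone f → f.Surjective → ∃ k, Poor G f k s b

-- A poor group of the division into pairs shows where to merge: two consecutive parts of that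
-- group stay poor, the factor 3 paying for the groups discarded, and every other part is unchanged.
theorem NoRichDivision.exists_poor_predAbove [Finite V] (hG : NoRichDivision G s b)
    {f : V → Fin (N + 2)} (hf : Monotone f) (hsurj : f.Surjective)
    (hpoor : ∀ i, Poor G f i (3 * s) b) :
    ∃ k : Fin (N + 1), ∀ j, Poor G (k.predAbove ∘ f) j (3 * s) b := by
  obtain ⟨l, hl⟩ := hG _ (pairUp N ∘ f) (monotone_pairUp.comp hf) (surjective_pairUp.comp hsurj)
  set k : Fin (N + 1) := ⟨2 * l, by omega⟩
  refine ⟨k, fun j => ?_⟩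
  obtain rfl | hj := eq_or_ne j k
  · refine hl.comp_of_comp (preimage_predAbove_subset_preimage_pairUp l rfl) fun y => ?_
    exact (Set.ncard_image_le).trans (ncard_preimage_pairUp_le y)
  · obtain ⟨i, hi⟩ := k.predAbove_surjective j
    rw [← one_mul (3 * s)]
    refine Poor.comp_of_comp (p := id) (hpoor i) ?_ fun y => ?_
    · exact fun i' hi' => eq_of_predAbove_eq_of_ne hj hi' hi
    · exact (Set.ncard_image_le).trans (Set.ncard_singleton y).le

theorem NoRichDivision.contractsTo_top [Finite V] (hG : NoRichDivision G s b)
    {f : V → Fin (N + 1)} (hf : Monotone f) (hsurj : f.Surjective)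
    (hpoor : ∀ i, Poor G f i (3 * s) b) :
    ContractsTo G ((3 * s + 1) * (2 * (b * (2 ^ b) ^ (3 * s)))) (nearTwins G f b) ⊤ := by
  set M := b * (2 ^ b) ^ (3 * s)
  have hM : ∀ i, (classesMeeting (nearTwins G f b) (f ⁻¹' {i})).ncard ≤ M := fun i =>
    ncard_classesMeeting_nearTwins_le (hpoor i)
  induction N with
  | zero =>
    refine contractsTo_of_le le_top fun t ht _ X _ => ?_
    have huniv : f ⁻¹' {0} = Set.univ := Set.eq_univ_of_forall fun v => Fin.fin_one_eq_zero (f v)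
    calc {Y | Y ∈ t.classes ∧ RedAdj G X Y}.ncard
        ≤ t.classes.ncard := Set.ncard_le_ncard (Set.sep_subset _ _)
      _ = (classesMeeting t (f ⁻¹' {0})).ncard := by rw [huniv, classes_eq_classesMeeting_univ]
      _ ≤ M := (ncard_classesMeeting_mono ht subset_rfl).trans (hM 0)
      _ ≤ (3 * s + 1) * (2 * M) := by nlinarith
  | succ N ih =>
    obtain ⟨k, hk⟩ := hG.exists_poor_predAbove hf hsurj hpoor
    have hmerge : ContractsTo G ((3 * s + 1) * (2 * M)) (nearTwins G f b)
        (nearTwins G (k.predAbove ∘ f) b) := by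
      refine contractsTo_of_le (nearTwins_le_nearTwins_comp f k.predAbove) fun t hft ht X hX => ?_
      have hred : RedDegLE G t.classes (3 * s * (2 * M)) :=
        redDegLE_of_le_nearTwins hk ht fun j =>
          (ncard_classesMeeting_mono hft subset_rfl).trans
            (ncard_classesMeeting_predAbove_le hM k j)
      exact (hred X hX).trans (Nat.mul_le_mul_right _ (Nat.le_succ _))
    exact hmerge.trans (ih (k.predAbove_right_monotone.comp hf)
      (k.predAbove_surjective.comp hsurj) hk fun j => ncard_classesMeeting_nearTwins_le (hk j))

theorem NoRichDivision.hasTwinWidthLE [Fintype V] (hG : NoRichDivision G s b) (hb : 1 ≤ b) :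
    HasTwinWidthLE G ((3 * s + 1) * (2 * (b * (2 ^ b) ^ (3 * s)))) := by
  apply hasTwinWidthLE_of_contractsTo
  obtain hV | hV := isEmpty_or_nonempty V
  · rw [show (⊥ : Setoid V) = ⊤ from Setoid.ext fun x => isEmptyElim x]
    exact .refl
  · obtain ⟨N, hN⟩ := Nat.exists_eq_succ_of_ne_zero (Fintype.card_ne_zero (α := V))
    let f : V ≃o Fin (N + 1) := (Fintype.orderIsoFinOfCardEq V hN).symm
    rw [← nearTwins_eq_bot_of_injective f.injective]
    exact hG.contractsTo_top f.monotone f.surjective fun _ => poor_of_injective f.injective hb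

end Merging

section Pattern

variable {V α ι κ : Type*} [Fintype α] [LinearOrder V] {G : SimpleGraph V} {U U' : α → Finset V}
  {φ : V → V} {A : ℕ}

/-- The set of vertices that receive a colour in the colouring `U`, in which a vertex may have
several colours or none: the vertices of colour `a` are those of `U a`. -/
def support (U : α → Finset V) : Finset V :=
  Finset.univ.biUnion U

/-- The isomorphism type of the coloured ordered graph that `G` induces on the coloured
vertices, in the form of its unique representative on an initial segment of `ℕ`. -/
def pattern (G : SimpleGraph V) (U : α → Finset V) :
    (k : ℕ) × SimpleGraph (Fin k) × (α → Set (Fin k)) :=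
  ⟨(support U).card, G.comap ((support U).orderEmbOfFin rfl),
    fun a => (support U).orderEmbOfFin rfl ⁻¹' U a⟩

/-- `φ` induces an isomorphism between the coloured ordered graphs carried by `U` and `U'`. -/
structure IsColoredIso (G : SimpleGraph V) (U U' : α → Finset V) (φ : V → V) : Prop where
  strictMonoOn : StrictMonoOn φ (support U)
  image_eq : ∀ a, φ '' U a = U' a
  adj_iff : ∀ u ∈ support U, ∀ v ∈ support U, G.Adj (φ u) (φ v) ↔ G.Adj u v

/-- For every `m ≠ 0`, at most `A ^ m` patterns with at most `m` vertices occur in `G`. -/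
def PatternGrowthLE (α : Type*) [Fintype α] (G : SimpleGraph V) (A : ℕ) : Prop :=
  ∀ m, m ≠ 0 → (pattern G '' {U : α → Finset V | (support U).card ≤ m}).ncard ≤ A ^ m

theorem mem_support_of_mem {a : α} {v : V} (hv : v ∈ U a) : v ∈ support U :=
  Finset.mem_biUnion.2 ⟨a, Finset.mem_univ a, hv⟩

theorem card_support_le {N : ℕ} (hN : ∀ a, (U a).card ≤ N) :
    (support U).card ≤ Fintype.card α * N :=
  Finset.card_biUnion_le_card_mul _ _ _ fun a _ => hN a

theorem pattern_eq_mk {k : ℕ} (hk : (support U).card = k) :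
    pattern G U = ⟨k, G.comap ((support U).orderEmbOfFin hk),
      fun a => (support U).orderEmbOfFin hk ⁻¹' U a⟩ := by
  subst hk
  rfl

theorem exists_isColoredIso_of_pattern_eq (h : pattern G U = pattern G U') :
    ∃ φ, IsColoredIso G U U' φ := by
  have hcard : (support U).card = (support U').card := congrArg Sigma.fst h
  rw [pattern_eq_mk hcard, pattern_eq_mk rfl, Sigma.mk.injEq, heq_eq_eq, Prod.mk.injEq] at h
  obtain ⟨-, hgraph, hcolor⟩ := h
  set e := (support U).orderEmbOfFin hcard
  set e' := (support U').orderEmbOfFin rfl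
  have mem_range {v} (hv : v ∈ support U) : ∃ i, e i = v := by
    rwa [← Set.mem_range, Finset.range_orderEmbOfFin]
  have mem_range' {v} (hv : v ∈ support U') : ∃ i, e' i = v := by
    rwa [← Set.mem_range, Finset.range_orderEmbOfFin]
  have hφ (i) : Function.extend e e' id (e i) = e' i := e.injective.extend_apply ..
  refine ⟨Function.extend e e' id, ?_, fun a => ?_, ?_⟩
  · intro u hu v hv huv
    obtain ⟨i, rfl⟩ := mem_range hu
    obtain ⟨j, rfl⟩ := mem_range hv
    rw [hφ, hφ, e'.lt_iff_lt]
    exact e.lt_iff_lt.1 huv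
  · have hmem (i) : e i ∈ U a ↔ e' i ∈ U' a := Set.ext_iff.1 (congrFun hcolor a) i
    ext v
    constructor
    · rintro ⟨u, hu, rfl⟩
      obtain ⟨i, rfl⟩ := mem_range (mem_support_of_mem hu)
      rw [hφ]
      exact (hmem i).1 hu
    · intro hv
      obtain ⟨i, rfl⟩ := mem_range' (mem_support_of_mem hv)
      exact ⟨e i, (hmem i).2 hv, hφ i⟩
  · intro u hu v hv
    obtain ⟨i, rfl⟩ := mem_range hu
    obtain ⟨j, rfl⟩ := mem_range hv
    rw [hφ, hφ]
    exact (congrArg (·.Adj i j) hgraph).to_iff.symm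

theorem eq_self_of_strictMonoOn_of_mapsTo {Z : Finset V} (hφ : StrictMonoOn φ Z)
    (hZ : Set.MapsTo φ Z Z) {v : V} (hv : v ∈ Z) : φ v = v := by
  have hcomp : φ ∘ Z.orderEmbOfFin rfl = Z.orderEmbOfFin rfl :=
    Finset.orderEmbOfFin_unique rfl (fun i => hZ (Z.orderEmbOfFin_mem rfl i)) fun i j hij =>
      hφ (Z.orderEmbOfFin_mem rfl i) (Z.orderEmbOfFin_mem rfl j)
        ((Z.orderEmbOfFin rfl).strictMono hij)
  obtain ⟨i, rfl⟩ : ∃ i, Z.orderEmbOfFin rfl i = v := by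
    rwa [← Set.mem_range, Finset.range_orderEmbOfFin]
  exact congrFun hcomp i

theorem IsColoredIso.mem_of_mem (hφ : IsColoredIso G U U' φ) {a : α} {v : V} (hv : v ∈ U a) :
    φ v ∈ U' a :=
  (hφ.image_eq a).subset ⟨v, hv, rfl⟩

theorem IsColoredIso.eq_self (hφ : IsColoredIso G U U' φ) {a : α} (ha : U a = U' a) {v : V}
    (hv : v ∈ U a) : φ v = v :=
  eq_self_of_strictMonoOn_of_mapsTo (hφ.strictMonoOn.mono fun _ => mem_support_of_mem)
    (fun _ hw => ha ▸ hφ.mem_of_mem hw) hv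

theorem exists_galoisConnection_of_monotone_of_surjective [Finite V] [PartialOrder κ]
    {f : V → κ} (hf : Monotone f) (hsurj : f.Surjective) : ∃ z : κ → V, GaloisConnection z f := by
  have exists_least (k : κ) : ∃ v, IsLeast {v | k ≤ f v} v := by
    obtain ⟨v, hv⟩ := hsurj k
    obtain ⟨w, hw, hmin⟩ := Set.exists_min_image {v | k ≤ f v} id (Set.toFinite _) ⟨v, hv.ge⟩
    exact ⟨w, hw, hmin⟩
  choose z hz using exists_least
  exact ⟨z, fun k v => ⟨fun h => (hz k).1.trans (hf h), fun h => (hz k).2 h⟩⟩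

-- Since `z` lists the first vertex of each part, fixing its values keeps every vertex in its part.
theorem IsColoredIso.apply_eq_apply [Fintype κ] [PartialOrder κ] {f : V → κ} {z : κ → V}
    (hz : GaloisConnection z f) (hφ : IsColoredIso G U U' φ) {a : α}
    (hU : U a = Finset.univ.image z) (hU' : U' a = Finset.univ.image z)
    {v : V} (hv : v ∈ support U) : f (φ v) = f v := by
  have hmem (k : κ) : z k ∈ U a := hU ▸ Finset.mem_image_of_mem z (Finset.mem_univ k)
  have hfix (k : κ) : φ (z k) = z k := hφ.eq_self (hU.trans hU'.symm) (hmem k)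
  refine eq_of_forall_le_iff fun k => ?_
  rw [← hz, ← hz, ← hφ.strictMonoOn.le_iff_le (mem_support_of_mem (hmem k)) hv, hfix]

theorem IsColoredIso.apply_section [Fintype ι] {f : V → κ} {g : ι → κ} (hg : g.Injective)
    (hφ : IsColoredIso G U U' φ) (hfφ : ∀ v ∈ support U, f (φ v) = f v) {x x' : ι → V} {a : α}
    (hU : U a = Finset.univ.image x) (hU' : U' a = Finset.univ.image x')
    (hx : ∀ i, f (x i) = g i) (hx' : ∀ i, f (x' i) = g i) (i : ι) : φ (x i) = x' i := by
  have hxi : x i ∈ U a := hU ▸ Finset.mem_image_of_mem x (Finset.mem_univ i)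
  have himage := hφ.mem_of_mem hxi
  rw [hU', Finset.mem_image] at himage
  obtain ⟨j, -, hj⟩ := himage
  have hji : g j = g i := by rw [← hx', hj, hfφ _ (mem_support_of_mem hxi), hx]
  rw [← hj, hg hji]

theorem PatternGrowthLE.card_le [Finite V] [Nonempty α] {X : Type*} [Finite X] {N F : ℕ}
    (hG : PatternGrowthLE α G A) (hN : N ≠ 0) (U : X → α → Finset V)
    (hU : ∀ x a, (U x a).card ≤ N)
    (hF : ∀ x₀, {x | pattern G (U x) = pattern G (U x₀)}.ncard ≤ F) :
    Nat.card X ≤ F * A ^ (Fintype.card α * N) := by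
  classical
  have := Fintype.ofFinite X
  have hrange : (Finset.univ.image fun x => pattern G (U x)).card ≤ A ^ (Fintype.card α * N) := by
    rw [← Set.ncard_coe_finset]
    refine (Set.ncard_le_ncard ?_ (Set.toFinite _)).trans (hG _ (by positivity))
    simp only [Finset.coe_image, Finset.coe_univ, Set.image_univ]
    rintro _ ⟨x, rfl⟩
    exact ⟨U x, card_support_le (hU x), rfl⟩
  rw [Nat.card_eq_fintype_card]
  refine (Finset.card_le_mul_card_image Finset.univ F fun p hp => ?_).trans
    (Nat.mul_le_mul_left _ hrange)
  obtain ⟨x₀, -, rfl⟩ := Finset.mem_image.1 hp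
  simpa only [Set.ncard_eq_toFinset_card', Set.toFinset_ofPred] using hF x₀

end Pattern

section Counting

variable {V κ : Type*} {G : SimpleGraph V} {f : V → κ} {A M s b : ℕ} {P Q T : Set V} {c : V}
  {I : Finset κ}

theorem card_image_univ_le [Fintype κ] [DecidableEq V] (x : I → V) :
    (Finset.univ.image x).card ≤ Fintype.card κ := by
  refine Finset.card_image_le.trans ?_
  rw [Finset.card_univ, Fintype.card_coe]
  exact I.card_le_univ

/-- The vertex `c` distinguishes two vertices of `P` that have the same trace on `T`. -/
def Splits (G : SimpleGraph V) (P T : Set V) (c : V) : Prop :=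
  ∃ x ∈ P, ∃ x' ∈ P, trace G T x = trace G T x' ∧ G.Adj x c ∧ ¬ G.Adj x' c

theorem traceCount_lt_traceCount_insert [Finite V] (h : Splits G P T c) :
    traceCount G P T < traceCount G P (insert c T) := by
  obtain ⟨x, hx, x', hx', hT, hadj, hnot⟩ := h
  have trace_inter (v : V) : trace G (insert c T) v ∩ T = trace G T v := by
    ext u
    simp only [trace, Set.mem_ofPred_eq, Set.mem_inter_iff, Set.mem_insert_iff]
    tauto
  have himage : trace G T '' P = (· ∩ T) '' (trace G (insert c T) '' P) := by
    simp only [Set.image_image, trace_inter]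
  rw [traceCount, traceCount, himage]
  refine lt_of_le_of_ne (Set.ncard_image_le) fun heq => hnot ?_
  have hinsert : trace G (insert c T) x = trace G (insert c T) x' :=
    Set.injOn_of_ncard_image_eq heq (Set.toFinite _) ⟨x, hx, rfl⟩ ⟨x', hx', rfl⟩
      ((trace_inter x).trans (hT.trans (trace_inter x').symm))
  exact (trace_eq_trace_iff.1 hinsert c (Set.mem_insert c T)).1 hadj

theorem traceCount_le_of_not_splits [Finite V] (h : ∀ c ∈ Q, ¬ Splits G P T c) :
    traceCount G P Q ≤ traceCount G P T := by
  refine ncard_image_le_ncard_image (fun x hx y hy hxy => ?_) P.toFinite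
  refine trace_eq_trace_iff.2 fun c hc => ⟨fun hadj => ?_, fun hadj => ?_⟩
  · by_contra hnot
    exact h c hc ⟨x, hx, y, hy, hxy, hadj, hnot⟩
  · by_contra hnot
    exact h c hc ⟨y, hy, x, hx, hxy.symm, hadj, hnot⟩

theorem poor_of_ncard_image_splits_le [Finite V] {i : κ}
    (hb : traceCount G (f ⁻¹' {i}) T ≤ b)
    (hs : (f '' {c | Splits G (f ⁻¹' {i}) T c}).ncard ≤ s) : Poor G f i s b := by
  have hfin : (f '' {c | Splits G (f ⁻¹' {i}) T c}).Finite := Set.toFinite _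
  refine ⟨hfin.toFinset, (Set.ncard_eq_toFinset_card _ hfin).ge.trans hs,
    (traceCount_le_of_not_splits fun c hc hsplit => ?_).trans hb⟩
  rw [hfin.coe_toFinset] at hc
  exact hc ⟨c, hsplit, rfl⟩

-- Maximise the total number of traces, truncated at `M` in each part, minus `M` for each element
-- of `T`: adding `c` to `T` costs `M` and gains at least one for each part of `S`.
theorem exists_finset_card_splits_le [Finite V] [Fintype κ] (G : SimpleGraph V) (f : V → κ)
    (hM : 0 < M) : ∃ T : Finset V, T.card ≤ Fintype.card κ ∧ ∀ (c : V) (S : Finset κ),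
      (∀ i ∈ S, traceCount G (f ⁻¹' {i}) T < M ∧ Splits G (f ⁻¹' {i}) T c) → S.card ≤ M := by
  classical
  let gain (T : Finset V) : ℕ := ∑ i, min (traceCount G (f ⁻¹' {i}) T) M
  obtain ⟨T, hT⟩ := Finite.exists_max fun T : Finset V => (gain T : ℤ) - M * T.card
  refine ⟨T, ?_, fun c S hS => ?_⟩
  · have hgain : gain T ≤ Fintype.card κ * M :=
      Finset.sum_le_card_nsmul _ _ _ fun i _ => min_le_right _ _
    have hempty := hT ∅
    refine le_of_mul_le_mul_left ?_ hM
    simp only [Finset.card_empty] at hempty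
    push_cast at hempty
    zify at hgain ⊢
    linarith [Int.natCast_nonneg (gain ∅)]
  · have hgain : gain T + S.card ≤ gain (insert c T) := by
      have hsum : S.card = ∑ i, if i ∈ S then 1 else 0 := by simp
      rw [hsum, ← Finset.sum_add_distrib]
      refine Finset.sum_le_sum fun i _ => ?_
      rw [Finset.coe_insert]
      split_ifs with hi
      · have := traceCount_lt_traceCount_insert (hS i hi).2
        have := (hS i hi).1
        omega
      · have := traceCount_mono (G := G) (P := f ⁻¹' {i}) subset_rfl (Set.subset_insert c T)
        omega
    have hcard : (M * (insert c T).card : ℤ) ≤ M * (T.card + 1) := by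
      exact_mod_cast Nat.mul_le_mul_left M (Finset.card_insert_le c T)
    have hinsert := hT (insert c T)
    zify at hgain ⊢
    linarith

-- Colour the first vertices of the parts, the set `T`, and one vertex of each part for each choice
-- of a trace: the traces on `T` can be read off from the pattern.
theorem PatternGrowthLE.prod_traceCount_le [Finite V] [LinearOrder V] [Fintype κ] [Nonempty κ]
    [PartialOrder κ] (hG : PatternGrowthLE (Fin 4) G A) (hf : Monotone f)
    (hsurj : f.Surjective) {T : Finset V} (hT : T.card ≤ Fintype.card κ) (I : Finset κ) :
    ∏ i ∈ I, traceCount G (f ⁻¹' {i}) T ≤ A ^ (4 * Fintype.card κ) := by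
  classical
  obtain ⟨z, hz⟩ := exists_galoisConnection_of_monotone_of_surjective hf hsurj
  let X := (i : I) → trace G T '' (f ⁻¹' {(i : κ)})
  have exists_section (g : X) :
      ∃ x : I → V, ∀ i, f (x i) = i ∧ trace G T (x i) = g i := by
    choose x hx using fun i => (g i).2
    exact ⟨x, hx⟩
  choose x hx using exists_section
  let U (g : X) : Fin 4 → Finset V :=
    ![Finset.univ.image z, T, Finset.univ.image (x g), ∅]
  have hU (g : X) (a : Fin 4) : (U g a).card ≤ Fintype.card κ := by
    match a with
    | 0 => exact Finset.card_image_le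
    | 1 => exact hT
    | 2 => exact card_image_univ_le _
    | 3 => exact Nat.zero_le _
  have hinj (g₀ : X) : {g | pattern G (U g) = pattern G (U g₀)}.ncard ≤ 1 := by
    refine (Set.ncard_le_ncard (t := {g₀}) fun g hg => ?_).trans (Set.ncard_singleton g₀).le
    obtain ⟨φ, hφ⟩ := exists_isColoredIso_of_pattern_eq hg
    have hxφ := hφ.apply_section (a := 2) Subtype.val_injective
      (fun v => hφ.apply_eq_apply hz (a := 0) rfl rfl) rfl rfl
      (fun i => (hx g i).1) (fun i => (hx g₀ i).1)
    ext i : 2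
    rw [← (hx g i).2, ← (hx g₀ i).2, trace_eq_trace_iff, ← hxφ]
    intro v hv
    rw [← hφ.adj_iff _ (mem_support_of_mem (a := 2) (Finset.mem_image_of_mem _ (Finset.mem_univ i)))
      v (mem_support_of_mem (a := 1) hv), hφ.eq_self (a := 1) rfl hv]
  have hcard : Nat.card X = ∏ i ∈ I, traceCount G (f ⁻¹' {i}) T := by
    rw [Nat.card_pi]
    exact Finset.prod_coe_sort I fun i => traceCount G (f ⁻¹' {i}) T
  simpa only [hcard, one_mul, Fintype.card_fin] using
    hG.card_le Fintype.card_ne_zero U hU hinj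

/-- The vertices `y i` witness splitting vertices of the parts `i ∈ I` with respect to `T`: `y i`
distinguishes the vertices `x i` and `x' i` of the part `i`, which have the same trace on `T`. -/
structure IsSplitting (G : SimpleGraph V) (f : V → κ) (T : Set V) (x x' y : I → V) : Prop where
  part_left : ∀ i, f (x i) = i
  part_right : ∀ i, f (x' i) = i
  trace_eq : ∀ i, trace G T (x i) = trace G T (x' i)
  adj : ∀ i, G.Adj (x i) (y i)
  not_adj : ∀ i, ¬ G.Adj (x' i) (y i)

theorem exists_isSplitting (g : (i : I) → f '' {c | Splits G (f ⁻¹' {(i : κ)}) T c}) :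
    ∃ x x' y, IsSplitting G f T x x' y ∧ ∀ i, f (y i) = g i := by
  have exists_triple (i : I) : ∃ x x' y, f x = i ∧ f x' = i ∧ trace G T x = trace G T x' ∧
      G.Adj x y ∧ ¬ G.Adj x' y ∧ f y = g i := by
    obtain ⟨y, ⟨x, hx, x', hx', hT, hadj, hnot⟩, hy⟩ := (g i).2
    exact ⟨x, x', y, hx, hx', hT, hadj, hnot, hy⟩
  choose x x' y hx hx' hT hadj hnot hy using exists_triple
  exact ⟨x, x', y, ⟨hx, hx', hT, hadj, hnot⟩, hy⟩

/-- The vertices among the `y j` that distinguish `x i` from `x' i`. -/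
def distinguishers (G : SimpleGraph V) (x x' y : I → V) (i : I) : Set I :=
  {j | G.Adj (x i) (y j) ∧ ¬ G.Adj (x' i) (y j)}

theorem IsSplitting.sum_ncard_distinguishers_le {x x' y : I → V}
    (h : IsSplitting G f T x x' y)
    (hI : ∀ c, ∀ S ⊆ I, (∀ i ∈ S, Splits G (f ⁻¹' {i}) T c) → S.card ≤ M) :
    ∑ i, (distinguishers G x x' y i).ncard ≤ I.card * M := by
  classical
  let r (i j : I) : Prop := j ∈ distinguishers G x x' y i
  have card_below (j : I) : (Finset.univ.bipartiteBelow r j).card ≤ M := by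
    rw [← Finset.card_map (Function.Embedding.subtype _)]
    refine hI (y j) _ (Finset.map_subtype_subset _) fun i hi => ?_
    obtain ⟨i, hr, rfl⟩ := Finset.mem_map.1 hi
    obtain ⟨hadj, hnot⟩ := (Finset.mem_bipartiteBelow r).1 hr |>.2
    exact ⟨x i, h.part_left i, x' i, h.part_right i, h.trace_eq i, hadj, hnot⟩
  calc ∑ i, (distinguishers G x x' y i).ncard
      = ∑ i, (Finset.univ.bipartiteAbove r i).card := by
        refine Finset.sum_congr rfl fun i _ => ?_
        rw [← Set.ncard_coe_finset, Finset.coe_bipartiteAbove]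
        simp [r]
    _ = ∑ j, (Finset.univ.bipartiteBelow r j).card :=
        Finset.sum_card_bipartiteAbove_eq_sum_card_bipartiteBelow r
    _ ≤ I.card * M := by
        simpa using Finset.sum_le_card_nsmul Finset.univ _ M fun j _ => card_below j

/-- The colouring that records a choice of splitting vertices, together with the first vertices
`z` of the parts. -/
def splittingColoring [Fintype κ] [DecidableEq V] (z : κ → V) (x x' y : I → V) :
    Fin 4 → Finset V :=
  ![Finset.univ.image z, Finset.univ.image x, Finset.univ.image x', Finset.univ.image y]

theorem exists_mem_distinguishers_of_pattern_eq [LinearOrder V] [Fintype κ] [PartialOrder κ]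
    {z : κ → V} (hz : GaloisConnection z f) {x x' y x₀ x₀' y₀ : I → V}
    (h : IsSplitting G f T x x' y) (h₀ : IsSplitting G f T x₀ x₀' y₀)
    (hpattern : pattern G (splittingColoring z x x' y) =
      pattern G (splittingColoring z x₀ x₀' y₀)) (i : I) :
    f (y i) ∈ (fun j => f (y₀ j)) '' distinguishers G x₀ x₀' y₀ i := by
  obtain ⟨φ, hφ⟩ := exists_isColoredIso_of_pattern_eq hpattern
  have mem_support (a : Fin 4) {w : I → V} (hw : splittingColoring z x x' y a =
      Finset.univ.image w) : w i ∈ support (splittingColoring z x x' y) :=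
    mem_support_of_mem (hw ▸ Finset.mem_image_of_mem w (Finset.mem_univ i))
  have hfφ : ∀ v ∈ support (splittingColoring z x x' y), f (φ v) = f v :=
    fun v => hφ.apply_eq_apply hz (a := 0) rfl rfl
  have hx : φ (x i) = x₀ i := hφ.apply_section (a := 1) Subtype.val_injective hfφ rfl rfl
    h.part_left h₀.part_left i
  have hx' : φ (x' i) = x₀' i := hφ.apply_section (a := 2) Subtype.val_injective hfφ rfl rfl
    h.part_right h₀.part_right i
  obtain ⟨j, -, hj⟩ : ∃ j ∈ Finset.univ, y₀ j = φ (y i) := Finset.mem_image.1 <|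
    hφ.mem_of_mem (a := 3) (Finset.mem_image_of_mem y (Finset.mem_univ i))
  refine ⟨j, ⟨?_, ?_⟩, ?_⟩
  · rw [hj, ← hx, hφ.adj_iff _ (mem_support 1 rfl) _ (mem_support 3 rfl)]
    exact h.adj i
  · rw [hj, ← hx', hφ.adj_iff _ (mem_support 2 rfl) _ (mem_support 3 rfl)]
    exact h.not_adj i
  · exact (congrArg f hj).trans (hfφ _ (mem_support 3 rfl))

theorem card_le_two_pow_of_forall_mem {β ι : Type*} [Fintype ι] [Finite β] (J : ι → Set β)
    (S : Set ((i : ι) → J i)) (D : ι → Set β) (hS : ∀ g ∈ S, ∀ i, (g i : β) ∈ D i) :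
    S.ncard ≤ 2 ^ ∑ i, (D i).ncard := by
  have hinj : Function.Injective fun (g : S) (i : ι) => (⟨_, hS g g.2 i⟩ : D i) := by
    intro g g' h
    ext i
    exact congrArg (fun k => (k i : β)) h
  calc S.ncard ≤ Nat.card ((i : ι) → D i) := Nat.card_le_card_of_injective _ hinj
    _ = ∏ i, (D i).ncard := Nat.card_pi
    _ ≤ ∏ i, 2 ^ (D i).ncard := Finset.prod_le_prod' fun i _ => Nat.lt_two_pow_self.le
    _ = 2 ^ ∑ i, (D i).ncard := Finset.prod_pow_eq_pow_sum _ _ _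

theorem PatternGrowthLE.prod_ncard_image_splits_le [Finite V] [LinearOrder V] [Fintype κ]
    [Nonempty κ] [PartialOrder κ] (hG : PatternGrowthLE (Fin 4) G A) (hf : Monotone f)
    (hsurj : f.Surjective)
    (hI : ∀ c, ∀ S ⊆ I, (∀ i ∈ S, Splits G (f ⁻¹' {i}) T c) → S.card ≤ M) :
    ∏ i ∈ I, (f '' {c | Splits G (f ⁻¹' {i}) T c}).ncard ≤
      2 ^ (Fintype.card κ * M) * A ^ (4 * Fintype.card κ) := by
  obtain ⟨z, hz⟩ := exists_galoisConnection_of_monotone_of_surjective hf hsurj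
  let X := (i : I) → f '' {c | Splits G (f ⁻¹' {(i : κ)}) T c}
  choose x x' y hsplit hy using fun g : X => exists_isSplitting g
  let U (g : X) : Fin 4 → Finset V := splittingColoring z (x g) (x' g) (y g)
  have hU (g : X) (a : Fin 4) : (U g a).card ≤ Fintype.card κ := by
    match a with
    | 0 => exact Finset.card_image_le
    | 1 | 2 | 3 => exact card_image_univ_le _
  have hfibre (g₀ : X) : {g | pattern G (U g) = pattern G (U g₀)}.ncard ≤
      2 ^ (Fintype.card κ * M) := by
    let D (i : I) : Set κ :=
      (fun j => f (y g₀ j)) '' distinguishers G (x g₀) (x' g₀) (y g₀) i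
    have hD : ∑ i, (D i).ncard ≤ Fintype.card κ * M :=
      (Finset.sum_le_sum fun i _ => Set.ncard_image_le).trans
        (((hsplit g₀).sum_ncard_distinguishers_le hI).trans
          (Nat.mul_le_mul_right M I.card_le_univ))
    refine (card_le_two_pow_of_forall_mem _ _ D fun g hg i => ?_).trans
      (Nat.pow_le_pow_right two_pos hD)
    rw [← hy g i]
    exact exists_mem_distinguishers_of_pattern_eq hz (hsplit g) (hsplit g₀) hg i
  have hcard : Nat.card X = ∏ i ∈ I, (f '' {c | Splits G (f ⁻¹' {i}) T c}).ncard := by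
    rw [Nat.card_pi]
    exact Finset.prod_coe_sort I fun i => (f '' {c | Splits G (f ⁻¹' {i}) T c}).ncard
  simpa only [hcard, Fintype.card_fin] using hG.card_le Fintype.card_ne_zero U hU hfibre

theorem two_mul_card_lt_of_prod_le_pow {ι : Type*} {I : Finset ι} {a : ι → ℕ} {D N : ℕ}
    (hD : 0 < D) (hN : N ≠ 0) (ha : ∀ i ∈ I, D ^ 2 < a i) (h : ∏ i ∈ I, a i ≤ D ^ N) :
    2 * I.card < N := by
  by_contra! hle
  have hpow : (D ^ 2 + 1) ^ I.card ≤ (D ^ 2) ^ I.card :=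
    calc (D ^ 2 + 1) ^ I.card ≤ ∏ i ∈ I, a i := Finset.pow_card_le_prod _ _ _ ha
      _ ≤ D ^ N := h
      _ ≤ D ^ (2 * I.card) := Nat.pow_le_pow_right hD hle
      _ = (D ^ 2) ^ I.card := pow_mul _ _ _
  exact hpow.not_gt (Nat.pow_lt_pow_left (Nat.lt_succ_self _) (by omega))

theorem PatternGrowthLE.exists_poor [Finite V] [LinearOrder V] [Finite κ] [Nonempty κ]
    [PartialOrder κ] (hG : PatternGrowthLE (Fin 4) G A) (hA : 0 < A) (hf : Monotone f)
    (hsurj : f.Surjective) :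
    ∃ k, Poor G f k ((2 ^ (A ^ 8 + 1) * A ^ 4) ^ 2) (A ^ 8) := by
  classical
  have := Fintype.ofFinite κ
  obtain ⟨T, hTcard, hT⟩ := exists_finset_card_splits_le G f (Nat.succ_pos (A ^ 8))
  by_contra! hrich
  let H : Finset κ := {i | A ^ 8 < traceCount G (f ⁻¹' {i}) T}
  have few_traces {i} (hi : i ∈ Hᶜ) : traceCount G (f ⁻¹' {i}) T ≤ A ^ 8 := by
    simpa [H] using hi
  have hH : 2 * H.card < Fintype.card κ := by
    refine two_mul_card_lt_of_prod_le_pow (D := A ^ 4) (by positivity) Fintype.card_ne_zero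
      (fun i hi => ?_) ((hG.prod_traceCount_le hf hsurj hTcard H).trans_eq (pow_mul ..))
    rw [← pow_mul]
    exact (Finset.mem_filter.1 hi).2
  have hHc : 2 * Hᶜ.card < Fintype.card κ := by
    have hprod := hG.prod_ncard_image_splits_le (I := Hᶜ) hf hsurj fun c S hS hsplit =>
      hT c S fun i hi => ⟨Nat.lt_succ_of_le (few_traces (hS hi)), hsplit i hi⟩
    have hpow : 2 ^ (Fintype.card κ * (A ^ 8 + 1)) * A ^ (4 * Fintype.card κ) =
        (2 ^ (A ^ 8 + 1) * A ^ 4) ^ Fintype.card κ := by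
      rw [mul_pow, ← pow_mul, ← pow_mul, mul_comm (Fintype.card κ)]
    refine two_mul_card_lt_of_prod_le_pow (by positivity) Fintype.card_ne_zero (fun i hi => ?_)
      (hprod.trans_eq hpow)
    by_contra! hle
    exact hrich i (poor_of_ncard_image_splits_le (few_traces hi) hle)
  have := H.card_add_card_compl
  omega

theorem PatternGrowthLE.noRichDivision [Finite V] [LinearOrder V]
    (hG : PatternGrowthLE (Fin 4) G A) (hA : 0 < A) :
    NoRichDivision G ((2 ^ (A ^ 8 + 1) * A ^ 4) ^ 2) (A ^ 8) :=
  fun _ _ hf hsurj => hG.exists_poor hA hf hsurj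

end Counting

section Growth

theorem exists_nat_mul_pow_bound {a : ℕ → ℕ} {c K : ℝ} (hc : 0 < c) (hK : 0 < K)
    (h : ∀ n, (a n : ℝ) ≤ K * c ^ n) :
    ∃ c' K' : ℕ, 0 < c' ∧ 0 < K' ∧ ∀ n, a n ≤ K' * c' ^ n := by
  refine ⟨⌈c⌉₊, ⌈K⌉₊, Nat.ceil_pos.2 hc, Nat.ceil_pos.2 hK, fun n => ?_⟩
  have hceil : (a n : ℝ) ≤ ⌈K⌉₊ * (⌈c⌉₊ : ℝ) ^ n :=
    (h n).trans (by gcongr <;> exact Nat.le_ceil _)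
  exact_mod_cast hceil

theorem patternGrowthLE_of_ncard_le {V : Type*} [LinearOrder V] {G : SimpleGraph V}
    (α : Type*) [Fintype α] {C : (n : ℕ) → Set (SimpleGraph (Fin n))} {c K : ℕ} (hc : 0 < c)
    (hCG : ∀ S : Finset V, G.comap (S.orderEmbOfFin rfl) ∈ C S.card)
    (hC : ∀ n, (C n).ncard ≤ K * c ^ n) :
    PatternGrowthLE α G (2 * K * (c * 2 ^ Fintype.card α)) := by
  intro m hm
  let S (k : ℕ) : Set ((k : ℕ) × SimpleGraph (Fin k) × (α → Set (Fin k))) :=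
    Sigma.mk k '' (C k ×ˢ Set.univ)
  have hsubset : pattern G '' {U : α → Finset V | (support U).card ≤ m} ⊆
      ⋃ k ∈ Finset.range (m + 1), S k := by
    rintro _ ⟨U, hU, rfl⟩
    exact Set.mem_biUnion (Finset.mem_range_succ_iff.2 hU) ⟨_, ⟨hCG _, trivial⟩, rfl⟩
  have ncard_le (k : ℕ) (hk : k ∈ Finset.range (m + 1)) :
      (S k).ncard ≤ K * (c * 2 ^ Fintype.card α) ^ m :=
    calc (S k).ncard = (C k).ncard * (2 ^ k) ^ Fintype.card α := by
          rw [Set.ncard_image_of_injective _ sigma_mk_injective, Set.ncard_prod, Set.ncard_univ,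
            Nat.card_fun, Nat.card_eq_fintype_card, Nat.card_eq_fintype_card, Fintype.card_set,
            Fintype.card_fin]
      _ ≤ K * c ^ k * (2 ^ k) ^ Fintype.card α := Nat.mul_le_mul_right _ (hC k)
      _ = K * (c * 2 ^ Fintype.card α) ^ k := by ring
      _ ≤ K * (c * 2 ^ Fintype.card α) ^ m := by
          gcongr
          · exact Nat.succ_le_of_lt (by positivity)
          · exact Finset.mem_range_succ_iff.1 hk
  calc (pattern G '' {U : α → Finset V | (support U).card ≤ m}).ncard
      ≤ ∑ k ∈ Finset.range (m + 1), (S k).ncard := by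
        refine (Set.ncard_le_ncard hsubset ?_).trans (Finset.set_ncard_biUnion_le _ _)
        exact Set.Finite.biUnion (Finset.finite_toSet _) fun k _ => (Set.toFinite _).image _
    _ ≤ (m + 1) * (K * (c * 2 ^ Fintype.card α) ^ m) := by
        simpa using Finset.sum_le_card_nsmul _ _ _ ncard_le
    _ ≤ 2 ^ m * (K ^ m * (c * 2 ^ Fintype.card α) ^ m) := by
        gcongr
        · exact Nat.lt_two_pow_self
        · exact Nat.le_self_pow hm K
    _ = (2 * K * (c * 2 ^ Fintype.card α)) ^ m := by ring

end Growth

end TwinWidth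

/-- Every small hereditary class of ordered graphs has bounded
twin-width.  An `n`-vertex ordered graph is modelled, up to isomorphism of ordered
graphs, as a simple graph on `Fin n` (with its natural order); a class of ordered
graphs is a family `C n ⊆ SimpleGraph (Fin n)`.  Hereditary means: for every
`G ∈ C n` and every subset `s` of `Fin n`, the induced ordered subgraph on `s`
(transported along the unique order isomorphism `Fin s.card ≃o s`) belongs to
`C s.card`.  Small means: there are constants `c > 0` and `K > 0` with
`|C n| ≤ K · c^n` for all `n` (the members of `C n` are exactly the isomorphism
classes of `n`-vertex ordered graphs in the class).  The conclusion is that some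
`d` bounds the twin-width of every (underlying graph of a) graph in the class. -/
theorem stmt_13 (C : (n : ℕ) → Set (SimpleGraph (Fin n)))
    (hereditary : ∀ (n : ℕ), ∀ G ∈ C n, ∀ s : Finset (Fin n),
      SimpleGraph.comap
        (fun i : Fin s.card => ((s.orderIsoOfFin rfl i : s) : Fin n)) G ∈ C s.card)
    (small : ∃ c K : ℝ, 0 < c ∧ 0 < K ∧
      ∀ n : ℕ, ((C n).ncard : ℝ) ≤ K * c ^ n) :
    ∃ d : ℕ, ∀ n : ℕ, ∀ G ∈ C n, HasTwinWidthLE G d := by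
  obtain ⟨c, K, hc, hK, hCcard⟩ := small
  obtain ⟨c', K', hc', hK', hC⟩ := TwinWidth.exists_nat_mul_pow_bound hc hK hCcard
  have hgrowth (n : ℕ) (G : SimpleGraph (Fin n)) (hG : G ∈ C n) :
      TwinWidth.PatternGrowthLE (Fin 4) G (2 * K' * (c' * 2 ^ Fintype.card (Fin 4))) :=
    TwinWidth.patternGrowthLE_of_ncard_le (Fin 4) hc' (hereditary n G hG) hC
  exact ⟨_, fun n G hG => ((hgrowth n G hG).noRichDivision (by positivity)).hasTwinWidthLE
    (Nat.one_le_pow _ _ (by positivity))⟩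
end
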